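/- arXiv:2602.00842 — 11 statements merged into one kernel-verified Lean document; each statement's English description precedes it below -/
import Mathlib

section
/- Fix n ≥ 1. Let UTSⁿ = {(w₁,w₂) ∈ ℝⁿ⁺¹ × ℝⁿ⁺¹ : ‖w₁‖ = 1, ‖w₂‖ = 1, ⟨w₁,w₂⟩ = 0} (the unit tangent bundle of Sⁿ), let proj : ℝⁿ⁺¹ → ℝⁿ delete the last coordinate, and let τ : UTSⁿ → UTSⁿ negate the last coordinate of both w₁ and w₂. Then: (i) for every (w₁,w₂) ∈ UTSⁿ, (proj w₁, proj w₂) ≠ (0,0), so that p(w₁,w₂) := (proj w₁, proj w₂)/√(‖proj w₁‖² + ‖proj w₂‖²) is a well-defined map into the unit sphere S²ⁿ⁻¹ ⊂ ℝⁿ × ℝⁿ; (ii) p maps UTSⁿ onto S²ⁿ⁻¹; (iii) for w, w′ ∈ UTSⁿ, p(w) = p(w′) if and only if w′ = w or w′ = τ(w); (iv) the fixed point set of τ is exactly the set of (w₁,w₂) ∈ UTSⁿ whose last coordinates both vanish (a copy of UTSⁿ⁻¹). Consequently p induces a homeomorphism UTSⁿ/τ ≅ S²ⁿ⁻¹. 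-/
noncomputable section

/-- The unit tangent bundle of `Sⁿ`: pairs of orthonormal vectors in `ℝⁿ⁺¹`. -/
def UTS (n : ℕ) : Set (EuclideanSpace ℝ (Fin (n + 1)) × EuclideanSpace ℝ (Fin (n + 1))) :=
  {w | ‖w.1‖ = 1 ∧ ‖w.2‖ = 1 ∧ (inner ℝ w.1 w.2 : ℝ) = 0}

/-- `proj : ℝⁿ⁺¹ → ℝⁿ`, deleting the last coordinate. -/
def projMap (n : ℕ) (w : EuclideanSpace ℝ (Fin (n + 1))) : EuclideanSpace ℝ (Fin n) :=
  WithLp.toLp 2 (fun i => w i.castSucc)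

/-- `τ`: negate the last coordinate of both entries of a pair. -/
def tauMap (n : ℕ) (w : EuclideanSpace ℝ (Fin (n + 1)) × EuclideanSpace ℝ (Fin (n + 1))) :
    EuclideanSpace ℝ (Fin (n + 1)) × EuclideanSpace ℝ (Fin (n + 1)) :=
  (WithLp.toLp 2 (fun i => if i = Fin.last n then -(w.1 i) else w.1 i),
   WithLp.toLp 2 (fun i => if i = Fin.last n then -(w.2 i) else w.2 i))

/-- The map `p(w₁,w₂) = (proj w₁, proj w₂)/√(‖proj w₁‖² + ‖proj w₂‖²)`. -/
def pMap (n : ℕ) (w : EuclideanSpace ℝ (Fin (n + 1)) × EuclideanSpace ℝ (Fin (n + 1))) :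
    EuclideanSpace ℝ (Fin n) × EuclideanSpace ℝ (Fin n) :=
  (Real.sqrt (‖projMap n w.1‖ ^ 2 + ‖projMap n w.2‖ ^ 2))⁻¹ • (projMap n w.1, projMap n w.2)

lemma aux_norm (n : ℕ) (w : EuclideanSpace ℝ (Fin (n + 1))) :
    ‖w‖ ^ 2 = ‖projMap n w‖ ^ 2 + (w (Fin.last n)) ^ 2 := by
  simp [EuclideanSpace.norm_sq_eq, Fin.sum_univ_castSucc, projMap]

lemma aux_inner (n : ℕ) (w w' : EuclideanSpace ℝ (Fin (n + 1))) :
    (inner ℝ w w' : ℝ) = inner ℝ (projMap n w) (projMap n w')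
      + w (Fin.last n) * w' (Fin.last n) := by
  simp [PiLp.inner_apply, Fin.sum_univ_castSucc, projMap, mul_comm]

lemma aux_ext (n : ℕ) (w w' : EuclideanSpace ℝ (Fin (n + 1)))
    (h : projMap n w = projMap n w') (h2 : w (Fin.last n) = w' (Fin.last n)) : w = w' := by
  ext i
  refine Fin.lastCases h2 (fun j => ?_) i
  have := congrArg (fun z : EuclideanSpace ℝ (Fin n) => z j) h
  simpa [projMap] using this

lemma aux_mem (n : ℕ) (w : EuclideanSpace ℝ (Fin (n + 1)) × EuclideanSpace ℝ (Fin (n + 1))) :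
    w ∈ UTS n ↔ (‖projMap n w.1‖ ^ 2 + (w.1 (Fin.last n)) ^ 2 = 1 ∧
      ‖projMap n w.2‖ ^ 2 + (w.2 (Fin.last n)) ^ 2 = 1 ∧
      (inner ℝ (projMap n w.1) (projMap n w.2) : ℝ)
        + w.1 (Fin.last n) * w.2 (Fin.last n) = 0) := by
  rw [← aux_norm, ← aux_norm, ← aux_inner]
  have h (x : EuclideanSpace ℝ (Fin (n + 1))) : ‖x‖ ^ 2 = 1 ↔ ‖x‖ = 1 := by
    constructor
    · intro h
      nlinarith [norm_nonneg x]
    · intro h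
      rw [h]; norm_num
  rw [h, h]; rfl

lemma aux_ne (n : ℕ) (w : EuclideanSpace ℝ (Fin (n + 1)) × EuclideanSpace ℝ (Fin (n + 1)))
    (hw : w ∈ UTS n) : (projMap n w.1, projMap n w.2) ≠ (0, 0) := by
  intro h
  obtain ⟨h1, h2⟩ := Prod.mk.inj h
  rw [aux_mem, h1, h2] at hw
  obtain ⟨ha, hb, hc⟩ := hw
  simp at ha hb hc
  rcases hc with hc | hc <;> simp [hc] at ha hb

lemma aux_pos (n : ℕ) (w : EuclideanSpace ℝ (Fin (n + 1)) × EuclideanSpace ℝ (Fin (n + 1)))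
    (hw : w ∈ UTS n) : 0 < ‖projMap n w.1‖ ^ 2 + ‖projMap n w.2‖ ^ 2 := by
  by_contra hcon
  apply aux_ne n w hw
  have h1 : ‖projMap n w.1‖ ^ 2 = 0 := by nlinarith [sq_nonneg ‖projMap n w.1‖, sq_nonneg ‖projMap n w.2‖]
  have h2 : ‖projMap n w.2‖ ^ 2 = 0 := by nlinarith [sq_nonneg ‖projMap n w.1‖, sq_nonneg ‖projMap n w.2‖]
  simp at h1 h2
  rw [h1, h2]

lemma aux_scale (n : ℕ) (w : EuclideanSpace ℝ (Fin (n + 1)) × EuclideanSpace ℝ (Fin (n + 1)))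
    (hw : w ∈ UTS n) :
    projMap n w.1 = √(‖projMap n w.1‖ ^ 2 + ‖projMap n w.2‖ ^ 2) • (pMap n w).1 ∧
    projMap n w.2 = √(‖projMap n w.1‖ ^ 2 + ‖projMap n w.2‖ ^ 2) • (pMap n w).2 := by
  have h := (Real.sqrt_pos.2 (aux_pos n w hw)).ne'
  constructor <;> simp only [pMap, Prod.smul_mk, smul_smul, mul_inv_cancel₀ h, one_smul]

lemma aux_unit (n : ℕ) (w : EuclideanSpace ℝ (Fin (n + 1)) × EuclideanSpace ℝ (Fin (n + 1)))
    (hw : w ∈ UTS n) : ‖(pMap n w).1‖ ^ 2 + ‖(pMap n w).2‖ ^ 2 = 1 := by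
  have h := aux_pos n w hw
  simp only [pMap, Prod.smul_mk, norm_smul, mul_pow, norm_inv, Real.norm_eq_abs, inv_pow, sq_abs]
  rw [Real.sq_sqrt h.le, ← mul_add, inv_mul_cancel₀ h.ne']

lemma aux_cs {n : ℕ} (x y : EuclideanSpace ℝ (Fin n)) :
    0 ≤ ‖x‖ ^ 2 * ‖y‖ ^ 2 - (inner ℝ x y : ℝ) ^ 2 := by
  have h := abs_real_inner_le_norm x y
  have := pow_le_pow_left₀ (abs_nonneg _) h 2
  rw [sq_abs, mul_pow] at this
  linarith

lemma aux_real {t s E : ℝ} (ht : 0 < t) (ht2 : t ≤ 2) (hs : 0 < s) (hs2 : s ≤ 2) (hE : 0 ≤ E)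
    (h1 : 1 - t + t ^ 2 * E = 0) (h2 : 1 - s + s ^ 2 * E = 0) : t = s := by
  have t1 : 1 ≤ t := by nlinarith [mul_nonneg (sq_nonneg t) hE]
  have s1 : 1 ≤ s := by nlinarith [mul_nonneg (sq_nonneg s) hE]
  have h : (t - s) * (s * t - s - t) = 0 := by linear_combination s ^ 2 * h1 - t ^ 2 * h2
  rcases mul_eq_zero.1 h with h | h
  · linarith
  · nlinarith [mul_nonneg (sub_nonneg.2 t1) (sub_nonneg.2 hs2), mul_nonneg (sub_nonneg.2 s1) (sub_nonneg.2 ht2)]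

lemma aux_T (n : ℕ) (w : EuclideanSpace ℝ (Fin (n + 1)) × EuclideanSpace ℝ (Fin (n + 1)))
    (hw : w ∈ UTS n) : ∃ t : ℝ, 0 < t ∧ t ≤ 2 ∧
      1 - t + t ^ 2 * (‖(pMap n w).1‖ ^ 2 * ‖(pMap n w).2‖ ^ 2
        - (inner ℝ (pMap n w).1 (pMap n w).2 : ℝ) ^ 2) = 0 ∧
      projMap n w.1 = √t • (pMap n w).1 ∧ projMap n w.2 = √t • (pMap n w).2 := by
  refine ⟨_, aux_pos n w hw, ?_, ?_, aux_scale n w hw⟩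
  · obtain ⟨h1, h2, -⟩ := (aux_mem n w).1 hw
    nlinarith [sq_nonneg (w.1 (Fin.last n)), sq_nonneg (w.2 (Fin.last n))]
  · obtain ⟨h1, h2, h3⟩ := (aux_mem n w).1 hw
    obtain ⟨g1, g2⟩ := aux_scale n w hw
    have hpos := aux_pos n w hw
    have hT := Real.sq_sqrt hpos.le
    have hu := aux_unit n w hw
    set t := ‖projMap n w.1‖ ^ 2 + ‖projMap n w.2‖ ^ 2
    rw [g1, norm_smul, mul_pow, Real.norm_eq_abs, sq_abs, hT] at h1
    rw [g2, norm_smul, mul_pow, Real.norm_eq_abs, sq_abs, hT] at h2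
    rw [g1, g2, real_inner_smul_left, real_inner_smul_right, ← mul_assoc, ← sq, hT] at h3
    generalize ‖(pMap n w).1‖ ^ 2 = A at *
    generalize ‖(pMap n w).2‖ ^ 2 = B at *
    generalize (inner ℝ (pMap n w).1 (pMap n w).2 : ℝ) = D at *
    generalize w.1 (Fin.last n) = a at *
    generalize w.2 (Fin.last n) = b at *
    have e1 : a ^ 2 = 1 - t * A := by linarith
    have e2 : b ^ 2 = 1 - t * B := by linarith
    have e3 : a * b = - (t * D) := by linarith
    have e4 : a ^ 2 * b ^ 2 = (t * D) ^ 2 := by rw [← mul_pow, e3]; ring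
    rw [e1, e2] at e4
    linear_combination e4 + t * hu

lemma aux_tau (n : ℕ) (w : EuclideanSpace ℝ (Fin (n + 1)) × EuclideanSpace ℝ (Fin (n + 1))) :
    projMap n (tauMap n w).1 = projMap n w.1 ∧ projMap n (tauMap n w).2 = projMap n w.2 ∧
    (tauMap n w).1 (Fin.last n) = - w.1 (Fin.last n) ∧
    (tauMap n w).2 (Fin.last n) = - w.2 (Fin.last n) := by
  refine ⟨?_, ?_, ?_, ?_⟩
  · ext i; simp [projMap, tauMap]
  · ext i; simp [projMap, tauMap]
  · simp [tauMap]
  · simp [tauMap]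

lemma aux_fib (n : ℕ) (w : EuclideanSpace ℝ (Fin (n + 1)) × EuclideanSpace ℝ (Fin (n + 1)))
    (hw : w ∈ UTS n)
    (w' : EuclideanSpace ℝ (Fin (n + 1)) × EuclideanSpace ℝ (Fin (n + 1)))
    (hw' : w' ∈ UTS n) : pMap n w = pMap n w' ↔ (w' = w ∨ w' = tauMap n w) := by
  obtain ⟨k1, k2, k3, k4⟩ := aux_tau n w
  constructor
  · intro h
    obtain ⟨t, t0, t2, te, p1, p2⟩ := aux_T n w hw
    obtain ⟨s, s0, s2, se, q1, q2⟩ := aux_T n w' hw'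
    rw [← h] at se q1 q2
    have hts := aux_real t0 t2 s0 s2 (aux_cs _ _) te se
    rw [← hts] at q1 q2
    have r1 := q1.trans p1.symm
    have r2 := q2.trans p2.symm
    obtain ⟨a1, a2, a3⟩ := (aux_mem n w).1 hw
    obtain ⟨b1, b2, b3⟩ := (aux_mem n w').1 hw'
    rw [r1] at b1
    rw [r2] at b2
    rw [r1, r2] at b3
    have c1 : w'.1 (Fin.last n) ^ 2 = w.1 (Fin.last n) ^ 2 := by linarith
    have c2 : w'.2 (Fin.last n) ^ 2 = w.2 (Fin.last n) ^ 2 := by linarith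
    have c3 : w'.1 (Fin.last n) * w'.2 (Fin.last n) = w.1 (Fin.last n) * w.2 (Fin.last n) := by
      linarith
    have key : (w'.1 (Fin.last n) = w.1 (Fin.last n) ∧ w'.2 (Fin.last n) = w.2 (Fin.last n)) ∨
        (w'.1 (Fin.last n) = - w.1 (Fin.last n) ∧ w'.2 (Fin.last n) = - w.2 (Fin.last n)) := by
      generalize w'.1 (Fin.last n) = a' at *
      generalize w'.2 (Fin.last n) = b' at *
      generalize w.1 (Fin.last n) = a at *
      generalize w.2 (Fin.last n) = b at *
      by_cases ha : a = 0
      · subst ha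
        have : a' = 0 := by simpa using c1
        subst this
        rcases sq_eq_sq_iff_eq_or_eq_neg.1 c2 with h | h
        · left; exact ⟨rfl, h⟩
        · right; exact ⟨by simp, h⟩
      · rcases sq_eq_sq_iff_eq_or_eq_neg.1 c1 with h | h
        · left; subst h; exact ⟨rfl, mul_left_cancel₀ ha c3⟩
        · right; subst h; exact ⟨rfl, mul_left_cancel₀ ha (by linarith)⟩
    rcases key with ⟨l1, l2⟩ | ⟨l1, l2⟩
    · left
      exact Prod.ext (aux_ext n _ _ r1 l1) (aux_ext n _ _ r2 l2)
    · right
      exact Prod.ext (aux_ext n _ _ (r1.trans k1.symm) (l1.trans k3.symm))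
        (aux_ext n _ _ (r2.trans k2.symm) (l2.trans k4.symm))
  · rintro (h | h)
    · rw [h]
    · rw [h]; simp only [pMap, k1, k2]

lemma aux_surj (n : ℕ) (v : EuclideanSpace ℝ (Fin n) × EuclideanSpace ℝ (Fin n))
    (hv : ‖v.1‖ ^ 2 + ‖v.2‖ ^ 2 = 1) : ∃ w ∈ UTS n, pMap n w = v := by
  have hE := aux_cs v.1 v.2
  obtain ⟨t, t0, t2, te⟩ : ∃ t : ℝ, 0 < t ∧ t ≤ 2 ∧ 1 - t + t ^ 2 * (‖v.1‖ ^ 2 * ‖v.2‖ ^ 2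
        - (inner ℝ v.1 v.2 : ℝ) ^ 2) = 0 := by
    have hE4 : 0 ≤ 1 - 4 * (‖v.1‖ ^ 2 * ‖v.2‖ ^ 2 - (inner ℝ v.1 v.2 : ℝ) ^ 2) := by
      have : (‖v.1‖ ^ 2 + ‖v.2‖ ^ 2) ^ 2 = 1 := by rw [hv]; norm_num
      nlinarith [sq_nonneg (‖v.1‖ ^ 2 - ‖v.2‖ ^ 2), sq_nonneg (inner ℝ v.1 v.2 : ℝ)]
    generalize ‖v.1‖ ^ 2 * ‖v.2‖ ^ 2 - (inner ℝ v.1 v.2 : ℝ) ^ 2 = E at *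
    have hr := Real.sqrt_nonneg (1 - 4 * E)
    have hr2 := Real.sq_sqrt hE4
    generalize √(1 - 4 * E) = r at *
    have hEr : E = (1 - r ^ 2) / 4 := by linarith
    refine ⟨2 / (1 + r), by positivity, ?_, ?_⟩
    · rw [div_le_iff₀ (by positivity)]; linarith
    · rw [hEr]
      have : 1 + r ≠ 0 := by positivity
      field_simp
      ring
  obtain ⟨a, b, ha, hb, hab⟩ : ∃ a b : ℝ, t * ‖v.1‖ ^ 2 + a ^ 2 = 1 ∧ t * ‖v.2‖ ^ 2 + b ^ 2 = 1 ∧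
      t * (inner ℝ v.1 v.2 : ℝ) + a * b = 0 := by
    generalize ‖v.1‖ ^ 2 = A at *
    generalize ‖v.2‖ ^ 2 = B at *
    generalize (inner ℝ v.1 v.2 : ℝ) = D at *
    have hp : (1 - t * A) * (1 - t * B) = (t * D) ^ 2 := by
      linear_combination te - t * hv
    have hsum : (1 - t * A) + (1 - t * B) = 2 - t := by linear_combination - t * hv
    have hA : 0 ≤ 1 - t * A := by
      by_contra hc
      nlinarith [sq_nonneg (t * D)]
    have hB : 0 ≤ 1 - t * B := by
      by_contra hc
      nlinarith [sq_nonneg (t * D)]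
    have hs : √(1 - t * A) * √(1 - t * B) = |t * D| := by
      rw [← Real.sqrt_mul hA, hp, Real.sqrt_sq_eq_abs]
    rcases abs_choice (t * D) with h | h
    · refine ⟨√(1 - t * A), -√(1 - t * B), ?_, ?_, ?_⟩
      · rw [Real.sq_sqrt hA]; ring
      · rw [neg_sq, Real.sq_sqrt hB]; ring
      · rw [mul_neg, hs, h]; ring
    · refine ⟨√(1 - t * A), √(1 - t * B), ?_, ?_, ?_⟩
      · rw [Real.sq_sqrt hA]; ring
      · rw [Real.sq_sqrt hB]; ring
      · rw [hs, h]; ring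
  let ext : EuclideanSpace ℝ (Fin n) → ℝ → EuclideanSpace ℝ (Fin (n + 1)) :=
    fun x a => WithLp.toLp 2 (Fin.snoc (α := fun _ => ℝ) (fun i => √t * x i) a)
  have e1 (x a) : projMap n (ext x a) = √t • x := by
    ext i; simp [projMap, ext]
  have e2 (x a) : ext x a (Fin.last n) = a := by simp [ext]
  have hT := Real.sq_sqrt t0.le
  refine ⟨(ext v.1 a, ext v.2 b), ?_, ?_⟩
  · rw [aux_mem]
    simp only [e1, e2, norm_smul, mul_pow, Real.norm_eq_abs, sq_abs, hT, real_inner_smul_left,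
      real_inner_smul_right]
    rw [← mul_assoc, ← sq, hT]
    exact ⟨ha, hb, hab⟩
  · simp only [pMap, e1, norm_smul, mul_pow, Real.norm_eq_abs, sq_abs, hT]
    rw [← mul_add, hv, mul_one]
    have := (Real.sqrt_pos.2 t0).ne'
    simp only [Prod.smul_mk, smul_smul, inv_mul_cancel₀ this, one_smul]

lemma aux_compact (n : ℕ) : CompactSpace (UTS n) := by
  rw [← isCompact_iff_compactSpace]
  apply Metric.isCompact_of_isClosed_isBounded
  · have h1 : IsClosed {w : EuclideanSpace ℝ (Fin (n + 1)) × EuclideanSpace ℝ (Fin (n + 1)) |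
      ‖w.1‖ = 1} := isClosed_eq (by fun_prop) (by fun_prop)
    have h2 : IsClosed {w : EuclideanSpace ℝ (Fin (n + 1)) × EuclideanSpace ℝ (Fin (n + 1)) |
      ‖w.2‖ = 1} := isClosed_eq (by fun_prop) (by fun_prop)
    have h3 : IsClosed {w : EuclideanSpace ℝ (Fin (n + 1)) × EuclideanSpace ℝ (Fin (n + 1)) |
      (inner ℝ w.1 w.2 : ℝ) = 0} := isClosed_eq (by fun_prop) (by fun_prop)
    exact h1.inter (h2.inter h3)
  · rw [isBounded_iff_forall_norm_le]
    refine ⟨1, fun w hw => ?_⟩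
    rw [Prod.norm_def]
    exact max_le hw.1.le hw.2.1.le

lemma aux_cont (n : ℕ) : Continuous (fun w : UTS n => pMap n (w : _)) := by
  have hp : Continuous (projMap n) := by unfold projMap; fun_prop
  have h1 : Continuous (fun w : UTS n => projMap n w.1.1) := hp.comp (by fun_prop)
  have h2 : Continuous (fun w : UTS n => projMap n w.1.2) := hp.comp (by fun_prop)
  have h3 : Continuous (fun w : UTS n => √(‖projMap n w.1.1‖ ^ 2 + ‖projMap n w.1.2‖ ^ 2)) :=
    Real.continuous_sqrt.comp ((h1.norm.pow 2).add (h2.norm.pow 2))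
  refine Continuous.smul (h3.inv₀ ?_) (h1.prodMk h2)
  intro w
  exact (Real.sqrt_pos.2 (aux_pos n w.1 w.2)).ne'

/-- The double branched cover `UTSⁿ → S²ⁿ⁻¹`: `p` is well defined, onto the unit sphere of
`ℝⁿ × ℝⁿ`, its fibers are exactly the orbits `{w, τ w}` of the involution `τ`, the fixed
set of `τ` is the copy of `UTSⁿ⁻¹` where both last coordinates vanish, and `p` induces a
homeomorphism `UTSⁿ/τ ≅ S²ⁿ⁻¹`. -/
theorem uts_double_branched_cover (n : ℕ) (hn : 1 ≤ n) :
    (∀ w ∈ UTS n, (projMap n w.1, projMap n w.2) ≠ (0, 0)) ∧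
    (∀ w ∈ UTS n, ‖(pMap n w).1‖ ^ 2 + ‖(pMap n w).2‖ ^ 2 = 1) ∧
    (∀ v : EuclideanSpace ℝ (Fin n) × EuclideanSpace ℝ (Fin n),
      ‖v.1‖ ^ 2 + ‖v.2‖ ^ 2 = 1 → ∃ w ∈ UTS n, pMap n w = v) ∧
    (∀ w ∈ UTS n, ∀ w' ∈ UTS n, (pMap n w = pMap n w' ↔ (w' = w ∨ w' = tauMap n w))) ∧
    (∀ w ∈ UTS n, (tauMap n w = w ↔ (w.1 (Fin.last n) = 0 ∧ w.2 (Fin.last n) = 0))) ∧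
    ∃ φ : Quot (fun a b : UTS n => b = a ∨ (b : _) = tauMap n a) ≃ₜ
        {v : EuclideanSpace ℝ (Fin n) × EuclideanSpace ℝ (Fin n) // ‖v.1‖ ^ 2 + ‖v.2‖ ^ 2 = 1},
      ∀ w : UTS n, ((φ (Quot.mk _ w)) : EuclideanSpace ℝ (Fin n) × EuclideanSpace ℝ (Fin n))
        = pMap n (w : _) := by
  refine ⟨aux_ne n, aux_unit n, aux_surj n, aux_fib n, ?_, ?_⟩
  · intro w _
    obtain ⟨k1, k2, k3, k4⟩ := aux_tau n w
    constructor
    · intro h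
      rw [h] at k3 k4
      exact ⟨by linarith, by linarith⟩
    · rintro ⟨h1, h2⟩
      exact Prod.ext (aux_ext n _ _ k1 (by rw [k3, h1, neg_zero]))
        (aux_ext n _ _ k2 (by rw [k4, h2, neg_zero]))
  · haveI := aux_compact n
    let f : UTS n → {v : EuclideanSpace ℝ (Fin n) × EuclideanSpace ℝ (Fin n) //
        ‖v.1‖ ^ 2 + ‖v.2‖ ^ 2 = 1} := fun w => ⟨pMap n w.1, aux_unit n w.1 w.2⟩
    have hf : Continuous f := (aux_cont n).subtype_mk _
    have hr : ∀ a b : UTS n, (b = a ∨ (b : _) = tauMap n a) → f a = f b := by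
      intro a b h
      apply Subtype.ext
      refine (aux_fib n a.1 a.2 b.1 b.2).2 (h.imp (fun h => congrArg _ h) id)
    let g : Quot (fun a b : UTS n => b = a ∨ (b : _) = tauMap n a) →
      {v : EuclideanSpace ℝ (Fin n) × EuclideanSpace ℝ (Fin n) //
        ‖v.1‖ ^ 2 + ‖v.2‖ ^ 2 = 1} := Quot.lift f hr
    have hg : Continuous g := continuous_quot_lift hr hf
    have hb : Function.Bijective g := by
      constructor
      · rintro ⟨a⟩ ⟨b⟩ h
        apply Quot.sound
        have := (aux_fib n a.1 a.2 b.1 b.2).1 (congrArg Subtype.val h)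
        exact this.imp (fun h => Subtype.ext h) id
      · rintro ⟨v, hv⟩
        obtain ⟨w, hw, e⟩ := aux_surj n v hv
        exact ⟨Quot.mk _ ⟨w, hw⟩, Subtype.ext e⟩
    exact ⟨Continuous.homeoOfEquivCompactToT2 (f := Equiv.ofBijective g hb) hg, fun w => rfl⟩
end
end

section
/- Let i, j ∈ ℍ denote the standard quaternion units. Define M(A,B) = (A⁻¹B, A⁻¹ i B) for unit quaternions A, B. Then: (i) M(A,B) lies in UTS³ := {(C,D) ∈ SU(2) × SU(2) : Re((star C)·D) = 0}; (ii) M maps SU(2) × SU(2) onto UTS³; (iii) for unit quaternions A, B, A′, B′, one has M(A,B) = M(A′,B′) if and only if there exists θ ∈ ℝ with A′ = exp(θ·i)·A and B′ = exp(θ·i)·B; (iv) M(j B j⁻¹, j A j⁻¹) = (j·star(C)·j⁻¹, j·star(D)·j⁻¹) where (C,D) = M(A,B). -/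
noncomputable section

/-- The standard quaternion unit `i`. -/
def qi : Quaternion ℝ := ⟨0, 1, 0, 0⟩

/-- The standard quaternion unit `j`. -/
def qj : Quaternion ℝ := ⟨0, 0, 1, 0⟩

/-- The map `M(A,B) = (A⁻¹B, A⁻¹ i B)`. -/
def Mmap (A B : Quaternion ℝ) : Quaternion ℝ × Quaternion ℝ := (A⁻¹ * B, A⁻¹ * qi * B)

/-- `exp(θ·i) = cos θ + (sin θ)·i` in the quaternions. -/
def expI (θ : ℝ) : Quaternion ℝ := ((Real.cos θ : ℝ) : Quaternion ℝ) + Real.sin θ • qi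

@[simp] theorem qi_re : qi.re = 0 := rfl

@[simp] theorem qi_imI : qi.imI = 1 := rfl

@[simp] theorem qi_imJ : qi.imJ = 0 := rfl

@[simp] theorem qi_imK : qi.imK = 0 := rfl

@[simp] theorem qj_re : qj.re = 0 := rfl

@[simp] theorem qj_imI : qj.imI = 0 := rfl

@[simp] theorem qj_imJ : qj.imJ = 1 := rfl

@[simp] theorem qj_imK : qj.imK = 0 := rfl

@[simp] theorem aux_one_re : (1 : Quaternion ℝ).re = 1 := rfl

@[simp] theorem aux_one_imI : (1 : Quaternion ℝ).imI = 0 := rfl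

@[simp] theorem aux_one_imJ : (1 : Quaternion ℝ).imJ = 0 := rfl

@[simp] theorem aux_one_imK : (1 : Quaternion ℝ).imK = 0 := rfl

theorem aux_normsq (A : Quaternion ℝ) (h : ‖A‖ = 1) :
    A.re ^ 2 + A.imI ^ 2 + A.imJ ^ 2 + A.imK ^ 2 = 1 := by
  rw [← Quaternion.normSq_def', Quaternion.normSq_eq_norm_mul_self, h]; norm_num

theorem aux_norm_s5 (A : Quaternion ℝ) (h : A.re ^ 2 + A.imI ^ 2 + A.imJ ^ 2 + A.imK ^ 2 = 1) :
    ‖A‖ = 1 := by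
  rw [← Quaternion.normSq_def', Quaternion.normSq_eq_norm_mul_self] at h
  nlinarith [norm_nonneg A]

theorem aux_ne_s5 (A : Quaternion ℝ) (h : ‖A‖ = 1) : A ≠ 0 := by
  rintro rfl; simp at h

theorem aux_inv (A : Quaternion ℝ) (h : ‖A‖ = 1) : A⁻¹ = star A := by
  rw [Quaternion.inv_def, Quaternion.normSq_eq_norm_mul_self, h]; simp

theorem aux_qi : ‖qi‖ = 1 := aux_norm_s5 _ (by simp)

theorem aux_qj : ‖qj‖ = 1 := aux_norm_s5 _ (by simp)

theorem aux_expI (t : ℝ) : ‖expI t‖ = 1 := aux_norm_s5 _ (by simp [expI])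

theorem aux_comm (t : ℝ) : qi * expI t = expI t * qi := by
  ext <;> simp [expI]

theorem aux_exists (U : Quaternion ℝ) (h : ‖U‖ = 1) (hc : U * qi = qi * U) :
    ∃ t : ℝ, U = expI t := by
  have hJ := congrArg (fun q : Quaternion ℝ => q.imJ) hc
  have hK := congrArg (fun q : Quaternion ℝ => q.imK) hc
  simp at hJ hK
  have hJ0 : U.imJ = 0 := by linarith
  have hK0 : U.imK = 0 := by linarith
  have h1 := aux_normsq U h
  rw [hJ0, hK0] at h1
  let z : ℂ := ⟨U.re, U.imI⟩
  have hz : ‖z‖ = 1 := by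
    have : Complex.normSq z = 1 := by simp [Complex.normSq_apply, z]; linarith
    rw [Complex.normSq_eq_norm_sq] at this
    nlinarith [norm_nonneg z]
  have e1 := Complex.norm_mul_cos_arg z
  have e2 := Complex.norm_mul_sin_arg z
  rw [hz, one_mul] at e1 e2
  refine ⟨z.arg, ?_⟩
  ext <;> simp [expI, e1, e2, hJ0, hK0] <;> simp [z]

theorem aux_conj (P : Quaternion ℝ) (h : ‖P‖ = 1) (h0 : P.re = 0) :
    ∃ A : Quaternion ℝ, ‖A‖ = 1 ∧ qi * A = A * P := by
  have h1 := aux_normsq P h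
  rw [h0] at h1
  have hPP : P * P = -1 := by
    apply Quaternion.ext
    · simp [h0]; linarith
    all_goals simp [h0]
    all_goals ring
  have hii : qi * qi = -1 := by apply Quaternion.ext <;> simp
  by_cases hA : 1 - qi * P = 0
  · refine ⟨qj, aux_qj, ?_⟩
    have h2 : P = -qi := by
      have h3 : qi * P = 1 := (sub_eq_zero.mp hA).symm
      calc P = -(qi * qi) * P := by rw [hii]; simp
        _ = -(qi * (qi * P)) := by rw [neg_mul, mul_assoc]
        _ = -qi := by rw [h3, mul_one]
    rw [h2]
    ext <;> simp 
  · have hc : qi * (1 - qi * P) = (1 - qi * P) * P := by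
      rw [mul_sub, sub_mul, mul_assoc, hPP, ← mul_assoc, hii]
      simp [add_comm]
    refine ⟨‖1 - qi * P‖⁻¹ • (1 - qi * P), ?_, ?_⟩
    · rw [norm_smul, norm_inv, norm_norm, inv_mul_cancel₀ (norm_ne_zero_iff.mpr hA)]
    · rw [mul_smul_comm, smul_mul_assoc, hc]

/-- The map `M(A,B) = (A⁻¹B, A⁻¹ i B)` on pairs of unit quaternions:
(i) it takes values in `UTS³ = {(C,D) ∈ SU(2)² : Re(C̄ D) = 0}`; (ii) it is onto `UTS³`;
(iii) `M(A,B) = M(A′,B′)` iff `(A′,B′) = (exp(θi)A, exp(θi)B)` for some `θ ∈ ℝ`;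
(iv) `M(jBj⁻¹, jAj⁻¹) = (j C̄ j⁻¹, j D̄ j⁻¹)` where `(C,D) = M(A,B)`. -/
theorem Mmap_principal_circle_bundle :
    (∀ A B : Quaternion ℝ, ‖A‖ = 1 → ‖B‖ = 1 →
      ‖(Mmap A B).1‖ = 1 ∧ ‖(Mmap A B).2‖ = 1 ∧ (star (Mmap A B).1 * (Mmap A B).2).re = 0) ∧
    (∀ C D : Quaternion ℝ, ‖C‖ = 1 → ‖D‖ = 1 → (star C * D).re = 0 →
      ∃ A B : Quaternion ℝ, ‖A‖ = 1 ∧ ‖B‖ = 1 ∧ Mmap A B = (C, D)) ∧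
    (∀ A B A' B' : Quaternion ℝ, ‖A‖ = 1 → ‖B‖ = 1 → ‖A'‖ = 1 → ‖B'‖ = 1 →
      (Mmap A B = Mmap A' B' ↔ ∃ θ : ℝ, A' = expI θ * A ∧ B' = expI θ * B)) ∧
    (∀ A B : Quaternion ℝ, ‖A‖ = 1 → ‖B‖ = 1 →
      Mmap (qj * B * qj⁻¹) (qj * A * qj⁻¹) =
        (qj * star (Mmap A B).1 * qj⁻¹, qj * star (Mmap A B).2 * qj⁻¹)) := by
  refine ⟨?_, ?_, ?_, ?_⟩
  · intro A B hA hB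
    refine ⟨by simp [Mmap, hA, hB], by simp [Mmap, hA, hB, aux_qi], ?_⟩
    have hA0 := aux_ne_s5 A hA
    have : star (Mmap A B).1 * (Mmap A B).2 = star B * qi * B := by
      simp only [Mmap]
      rw [star_mul, aux_inv A hA, star_star, ← aux_inv A hA]
      simp only [mul_assoc]
      rw [mul_inv_cancel_left₀ hA0]
    rw [this]
    simp
    ring
  · intro C D hC hD h
    have hC0 := aux_ne_s5 C hC
    have hre : (D * C⁻¹).re = 0 := by
      rw [aux_inv C hC]
      simp at h ⊢
      linarith
    obtain ⟨A, hA, hc⟩ := aux_conj (D * C⁻¹) (by simp [hC, hD]) hre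
    have hA0 := aux_ne_s5 A hA
    refine ⟨A, A * C, hA, by simp [hA, hC], ?_⟩
    simp only [Mmap, Prod.mk.injEq]
    refine ⟨inv_mul_cancel_left₀ hA0 _, ?_⟩
    rw [mul_assoc, ← mul_assoc qi, hc, mul_assoc, inv_mul_cancel_left₀ hA0,
      inv_mul_cancel_right₀ hC0]
  · intro A B A' B' hA hB hA' hB'
    have hA0 := aux_ne_s5 A hA
    have hB0 := aux_ne_s5 B hB
    have hA0' := aux_ne_s5 A' hA'
    constructor
    · intro h
      simp only [Mmap, Prod.mk.injEq] at h
      obtain ⟨h1, h2⟩ := h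
      have hB1 : B' = A' * A⁻¹ * B := by
        rw [mul_assoc, h1, mul_inv_cancel_left₀ hA0']
      have hc : A' * A⁻¹ * qi = qi * (A' * A⁻¹) := by
        apply mul_right_cancel₀ hB0
        calc A' * A⁻¹ * qi * B = A' * (A⁻¹ * qi * B) := by simp only [mul_assoc]
          _ = qi * B' := by rw [h2, mul_assoc, mul_inv_cancel_left₀ hA0']
          _ = qi * (A' * A⁻¹) * B := by rw [hB1]; simp only [mul_assoc]
      obtain ⟨t, ht⟩ := aux_exists (A' * A⁻¹) (by simp [hA, hA']) hc
      refine ⟨t, ?_, ?_⟩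
      · rw [← ht, inv_mul_cancel_right₀ hA0]
      · rw [← ht, hB1]
    · rintro ⟨t, rfl, rfl⟩
      have hU := aux_ne_s5 _ (aux_expI t)
      simp only [Mmap, Prod.mk.injEq, mul_inv_rev, mul_assoc]
      refine ⟨by rw [inv_mul_cancel_left₀ hU], ?_⟩
      rw [← mul_assoc qi, aux_comm, mul_assoc, inv_mul_cancel_left₀ hU]
  · intro A B hA hB
    have hj := aux_ne_s5 _ aux_qj
    have hji : qj⁻¹ * (qi * qj) = -qi := by
      rw [aux_inv _ aux_qj]; ext <;> simp 
    have hsi : star qi = -qi := by ext <;> simp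
    simp only [Mmap, Prod.mk.injEq, mul_inv_rev, inv_inv, star_mul, aux_inv A hA, aux_inv B hB,
      star_star, mul_assoc, hsi]
    refine ⟨by rw [inv_mul_cancel_left₀ hj], ?_⟩
    rw [← hji]
    simp only [mul_assoc]
end
end

section
/- Define W(a,b) = (Re a, Re b, Re(a·star b)) for unit quaternions a, b. Then the image of W on SU(2) × SU(2) is exactly the Goldman pillow B = {(x,y,z) ∈ ℝ³ : x² + y² + z² − 2xyz ≤ 1, |x| ≤ 1, |y| ≤ 1, |z| ≤ 1}; that is, every pair of unit quaternions (a,b) satisfies (Re a)² + (Re b)² + (Re(a·star b))² − 2·(Re a)·(Re b)·(Re(a·star b)) ≤ 1, and every point of B arises as W(a,b) for some pair of unit quaternions. -/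
theorem norm_one_iff_aux (a : Quaternion ℝ) :
    ‖a‖ = 1 ↔ a.re ^ 2 + a.imI ^ 2 + a.imJ ^ 2 + a.imK ^ 2 = 1 := by
  rw [← Quaternion.normSq_def', Quaternion.normSq_eq_norm_mul_self]
  constructor
  · intro h; rw [h]; norm_num
  · intro h; nlinarith [norm_nonneg a]

theorem re_mul_star_aux (a b : Quaternion ℝ) :
    (a * star b).re = a.re * b.re + a.imI * b.imI + a.imJ * b.imJ + a.imK * b.imK := by
  simp

/-- The image of `W(a,b) = (Re a, Re b, Re(a·star b))` on pairs of unit quaternions is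
exactly the Goldman pillow `B = {(x,y,z) : x²+y²+z²−2xyz ≤ 1, |x| ≤ 1, |y| ≤ 1, |z| ≤ 1}`. -/
theorem goldman_pillow_image :
    (∀ a b : Quaternion ℝ, ‖a‖ = 1 → ‖b‖ = 1 →
      a.re ^ 2 + b.re ^ 2 + (a * star b).re ^ 2 - 2 * a.re * b.re * (a * star b).re ≤ 1 ∧
      |a.re| ≤ 1 ∧ |b.re| ≤ 1 ∧ |(a * star b).re| ≤ 1) ∧
    (∀ x y z : ℝ, x ^ 2 + y ^ 2 + z ^ 2 - 2 * x * y * z ≤ 1 →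
      |x| ≤ 1 → |y| ≤ 1 → |z| ≤ 1 →
      ∃ a b : Quaternion ℝ, ‖a‖ = 1 ∧ ‖b‖ = 1 ∧
        a.re = x ∧ b.re = y ∧ (a * star b).re = z) := by
  constructor
  · intro a b ha hb
    have key : ∀ a : Quaternion ℝ, ‖a‖ = 1 → |a.re| ≤ 1 := by
      intro a ha
      rw [norm_one_iff_aux] at ha
      rw [← sq_le_one_iff_abs_le_one]
      nlinarith [sq_nonneg a.imI, sq_nonneg a.imJ, sq_nonneg a.imK]
    refine ⟨?_, key a ha, key b hb, key _ (by rw [norm_mul, norm_star, ha, hb, one_mul])⟩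
    rw [norm_one_iff_aux] at ha hb
    rw [re_mul_star_aux]
    obtain ⟨x, p, q, r⟩ := a
    obtain ⟨y, u, v, w⟩ := b
    simp only at ha hb ⊢
    have h1 : p ^ 2 + q ^ 2 + r ^ 2 = 1 - x ^ 2 := by linarith
    have h2 : u ^ 2 + v ^ 2 + w ^ 2 = 1 - y ^ 2 := by linarith
    have h3 : (p * u + q * v + r * w) ^ 2 ≤ (1 - x ^ 2) * (1 - y ^ 2) := by
      rw [← h1, ← h2]
      nlinarith [sq_nonneg (p * v - q * u), sq_nonneg (p * w - r * u), sq_nonneg (q * w - r * v)]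
    nlinarith
  · intro x y z h hx hy hz
    rw [← sq_le_one_iff_abs_le_one] at hx hy
    have h3 : (z - x * y) ^ 2 ≤ (1 - x ^ 2) * (1 - y ^ 2) := by nlinarith
    by_cases hs : 1 - x ^ 2 = 0
    · have hz' : z - x * y = 0 := by
        rw [hs, zero_mul] at h3
        exact pow_eq_zero_iff (two_ne_zero) |>.1 (le_antisymm h3 (sq_nonneg _))
      refine ⟨⟨x, 0, 0, 0⟩, ⟨y, √(1 - y ^ 2), 0, 0⟩, ?_, ?_, rfl, rfl, ?_⟩
      · refine (norm_one_iff_aux _).2 ?_; simp only; linarith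
      · refine (norm_one_iff_aux _).2 ?_; simp only; rw [Real.sq_sqrt (by linarith)]; ring
      · refine (re_mul_star_aux _ _).trans ?_; simp only; linarith
    · have hp : 0 < 1 - x ^ 2 := lt_of_le_of_ne (by linarith) (Ne.symm hs)
      have hsq : √(1 - x ^ 2) ^ 2 = 1 - x ^ 2 := Real.sq_sqrt hp.le
      have hs0 : √(1 - x ^ 2) ≠ 0 := (Real.sqrt_pos.2 hp).ne'
      have hc : ((z - x * y) / √(1 - x ^ 2)) ^ 2 ≤ 1 - y ^ 2 := by
        rw [div_pow, hsq, div_le_iff₀ hp]; linarith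
      refine ⟨⟨x, √(1 - x ^ 2), 0, 0⟩, ⟨y, (z - x * y) / √(1 - x ^ 2),
        √(1 - y ^ 2 - ((z - x * y) / √(1 - x ^ 2)) ^ 2), 0⟩, ?_, ?_, rfl, rfl, ?_⟩
      · refine (norm_one_iff_aux _).2 ?_; simp only; rw [hsq]; ring
      · refine (norm_one_iff_aux _).2 ?_; simp only; rw [Real.sq_sqrt (by linarith)]; ring
      · refine (re_mul_star_aux _ _).trans ?_; simp only; rw [mul_div_cancel₀ _ hs0]; ring
end

section
/- Define W(a,b) = (Re a, Re b, Re(a·star b)) for unit quaternions a, b. Then for unit quaternions a, b, c, d, one has W(a,b) = W(c,d) if and only if there exists a unit quaternion u with c = u·a·u⁻¹ and d = u·b·u⁻¹. In other words, W separates conjugacy classes of pairs of unit quaternions under simultaneous conjugation. -/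
open Quaternion in
lemma aux_sq (p : Quaternion ℝ) (hp : p.re = 0) : p * p = ((-(normSq p) : ℝ) : Quaternion ℝ) := by
  obtain ⟨n, hn⟩ : ∃ n, n = normSq p := ⟨_, rfl⟩
  rw [← hn]
  rw [Quaternion.normSq_def', hp] at hn
  ext
  · simp [hp]; linarith
  · simp [hp]; ring
  · simp [hp]; ring
  · simp [hp]; ring

lemma aux_anti (p q : Quaternion ℝ) (hp : p.re = 0) (hq : q.re = 0) :
    p * q + q * p = ((2 * (p * q).re : ℝ) : Quaternion ℝ) := by
  ext <;> simp [hp, hq] <;> ring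

lemma aux_recomm (p q : Quaternion ℝ) : (p * q).re = (q * p).re := by
  simp; ring

lemma aux_reconj (u p : Quaternion ℝ) (hu : u ≠ 0) : (u * p * u⁻¹).re = p.re := by
  rw [aux_recomm, ← mul_assoc, inv_mul_cancel₀ hu, one_mul]

open Quaternion in
lemma aux_one (p r : Quaternion ℝ) (hp : p.re = 0) (hr : r.re = 0) (h : normSq p = normSq r) :
    ∃ u : Quaternion ℝ, u ≠ 0 ∧ u * p = r * u := by
  have h2 : p * p = r * r := by rw [aux_sq p hp, aux_sq r hr, h]
  have hc : ∀ x : Quaternion ℝ, x * (p * p) = (p * p) * x := by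
    intro x; rw [aux_sq p hp]; exact (Quaternion.coe_commutes _ x).symm
  have key : ∀ x : Quaternion ℝ, (r * x + x * p) * p = r * (r * x + x * p) := by
    intro x
    calc (r * x + x * p) * p = r * x * p + x * (p * p) := by noncomm_ring
      _ = r * x * p + (r * r) * x := by rw [hc, h2]
      _ = _ := by noncomm_ring
  by_contra hcon
  push Not at hcon
  have hz : ∀ x : Quaternion ℝ, r * x + x * p = 0 := by
    intro x; by_contra hx; exact hcon _ hx (key x)
  have h1 := hz 1
  have hrp : r = -p := by
    rw [mul_one, one_mul] at h1; exact eq_neg_of_add_eq_zero_left h1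
  subst hrp
  obtain ⟨x, hx0, hx1, hx2, hx3⟩ : ∃ x : Quaternion ℝ, x.re = 0 ∧ x.imI = 1 ∧ x.imJ = 0 ∧
      x.imK = 0 := ⟨⟨0, 1, 0, 0⟩, rfl, rfl, rfl, rfl⟩
  obtain ⟨y, hy0, hy1, hy2, hy3⟩ : ∃ x : Quaternion ℝ, x.re = 0 ∧ x.imI = 0 ∧ x.imJ = 1 ∧
      x.imK = 0 := ⟨⟨0, 0, 1, 0⟩, rfl, rfl, rfl, rfl⟩
  have hi := hz x
  have hj := hz y
  rw [Quaternion.ext_iff] at hi hj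
  simp [hx0, hx1, hx2, hx3, hy0, hy1, hy2, hy3] at hi hj
  have hp0 : p = 0 := by
    ext
    · simp [hp]
    · simp; linarith [hj.2]
    · simp; linarith [hi.2]
    · simp; linarith [hi.1]
  exact hcon 1 one_ne_zero (by simp [hp0])

open Quaternion in
lemma aux_two (p q s : Quaternion ℝ) (hp : p.re = 0) (hq : q.re = 0) (hs : s.re = 0)
    (h : normSq q = normSq s) (hpq : (p * q).re = (p * s).re) :
    ∃ u : Quaternion ℝ, u ≠ 0 ∧ u * p = p * u ∧ u * q = s * u := by
  by_cases hp0 : p = 0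
  · obtain ⟨u, hu, hu'⟩ := aux_one q s hq hs h
    exact ⟨u, hu, by simp [hp0], hu'⟩
  have hT : p * q + q * p = p * s + s * p := by
    rw [aux_anti p q hp hq, aux_anti p s hp hs, hpq]
  have hTc : ∀ x : Quaternion ℝ, x * (p * q + q * p) = (p * q + q * p) * x := by
    intro x; rw [aux_anti p q hp hq]; exact (Quaternion.coe_commutes _ x).symm
  have hPc : ∀ x : Quaternion ℝ, x * (p * p) = (p * p) * x := by
    intro x; rw [aux_sq p hp]; exact (Quaternion.coe_commutes _ x).symm
  obtain ⟨Q, hQ⟩ : ∃ Q, Q = p * q - q * p := ⟨_, rfl⟩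
  obtain ⟨S, hS⟩ : ∃ S, S = p * s - s * p := ⟨_, rfl⟩
  have hQre : Q.re = 0 := by rw [hQ, Quaternion.re_sub, aux_recomm p q, sub_self]
  have hpQ : p * Q = -(Q * p) := by
    have := hPc q
    rw [hQ]
    calc p * (p * q - q * p) = (p * p) * q - p * q * p := by noncomm_ring
      _ = q * (p * p) - p * q * p := by rw [this]
      _ = _ := by noncomm_ring
  have hpS : p * S = -(S * p) := by
    have := hPc s
    rw [hS]
    calc p * (p * s - s * p) = (p * p) * s - p * s * p := by noncomm_ring
      _ = s * (p * p) - p * s * p := by rw [this]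
      _ = _ := by noncomm_ring
  have hQc : ∀ x : Quaternion ℝ, x * (Q * Q) = (Q * Q) * x := by
    intro x; rw [aux_sq Q hQre]; exact (Quaternion.coe_commutes _ x).symm
  have hQS : Q * Q = S * S := by
    have hSre : S.re = 0 := by rw [hS, Quaternion.re_sub, aux_recomm p s, sub_self]
    rw [aux_sq Q hQre, aux_sq S hSre]
    congr 2
    rw [hQ, hS]
    rw [Quaternion.normSq_def', Quaternion.normSq_def'] at *
    simp [hp, hq, hs] at h hpq ⊢
    linear_combination (4 * (p.imI^2+p.imJ^2+p.imK^2)) * h + 4 * (p.imI * q.imI + p.imJ * q.imJ + p.imK * q.imK + p.imI * s.imI + p.imJ * s.imJ + p.imK * s.imK) * hpq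
  have h2q : p * q + p * q = (p * q + q * p) + Q := by rw [hQ]; abel
  have h2s : p * s + p * s = (p * q + q * p) + S := by rw [hS, hT]; abel
  have two : ∀ x y : Quaternion ℝ, x + x = y + y → x = y := by
    intro x y hxy
    rw [← two_smul ℝ x, ← two_smul ℝ y] at hxy
    exact smul_right_injective _ (two_ne_zero (α := ℝ)) hxy
  by_cases hQ0 : Q = 0
  · have hS0 : S = 0 := by
      rw [hQ0, mul_zero] at hQS
      exact mul_self_eq_zero.mp hQS.symm
    refine ⟨1, one_ne_zero, by simp, ?_⟩
    rw [one_mul, mul_one]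
    apply mul_left_cancel₀ hp0
    apply two
    rw [h2q, h2s, hQ0, hS0]
  by_cases hSQ : S + Q = 0
  · refine ⟨p, hp0, rfl, ?_⟩
    apply two
    have : s * p + s * p = (p * s + s * p) - S := by rw [hS]; abel
    rw [h2q, this, ← hT, eq_neg_of_add_eq_zero_left hSQ, sub_neg_eq_add]
  · have hup : (S + Q) * Q * p = p * ((S + Q) * Q) := by
      have e1 : Q * p = -(p * Q) := by rw [hpQ, neg_neg]
      have e2 : S * p = -(p * S) := by rw [hpS, neg_neg]
      calc (S + Q) * Q * p = (S + Q) * (Q * p) := by rw [mul_assoc]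
        _ = -((S * p + Q * p) * Q) := by 
          rw [show (S + Q) * (Q * p) = (S + Q) * (-(p * Q)) by rw [e1]]; noncomm_ring
        _ = _ := by rw [e1, e2]; noncomm_ring
    have huQ : (S + Q) * Q * Q = S * ((S + Q) * Q) := by
      calc (S + Q) * Q * Q = S * Q * Q + Q * Q * Q := by noncomm_ring
        _ = S * Q * Q + S * S * Q := by rw [hQS]
        _ = _ := by noncomm_ring
    have hu0 : (S + Q) * Q ≠ 0 := mul_ne_zero hSQ hQ0
    generalize (S + Q) * Q = u at hup huQ hu0
    refine ⟨u, hu0, hup, ?_⟩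
    apply mul_left_cancel₀ hp0
    apply two
    calc p * (u * q) + p * (u * q) = u * (p * q + p * q) := by
          rw [← mul_assoc, ← hup]; noncomm_ring
      _ = (p * s + p * s) * u := by rw [h2q, h2s, mul_add, add_mul, hTc, huQ]
      _ = _ := by noncomm_ring

/-- `W(a,b) = (Re a, Re b, Re(a·star b))` separates conjugacy classes of pairs of unit
quaternions under simultaneous conjugation: `W(a,b) = W(c,d)` iff `(c,d) = (uau⁻¹, ubu⁻¹)`
for some unit quaternion `u`. -/
theorem W_separates_conjugacy_classes (a b c d : Quaternion ℝ)
    (ha : ‖a‖ = 1) (hb : ‖b‖ = 1) (hc : ‖c‖ = 1) (hd : ‖d‖ = 1) :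
    (a.re = c.re ∧ b.re = d.re ∧ (a * star b).re = (c * star d).re) ↔
      ∃ u : Quaternion ℝ, ‖u‖ = 1 ∧ c = u * a * u⁻¹ ∧ d = u * b * u⁻¹ := by
  constructor
  · rintro ⟨h1, h2, h3⟩
    have nn : ∀ x : Quaternion ℝ, ‖x‖ = 1 → Quaternion.normSq x = 1 := by
      intro x hx; rw [Quaternion.normSq_eq_norm_mul_self, hx, one_mul]
    have na := nn a ha
    have nb := nn b hb
    have nc := nn c hc
    have nd := nn d hd
    rw [Quaternion.normSq_def'] at na nb nc nd
    have hpr : Quaternion.normSq a.im = Quaternion.normSq c.im := by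
      rw [Quaternion.normSq_def', Quaternion.normSq_def']; simp; rw [h1] at na; linarith
    have hqs : Quaternion.normSq b.im = Quaternion.normSq d.im := by
      rw [Quaternion.normSq_def', Quaternion.normSq_def']; simp; rw [h2] at nb; linarith
    have hdot : (a.im * b.im).re = (c.im * d.im).re := by
      simp at h3 ⊢; rw [h1, h2] at h3; linarith
    obtain ⟨v, hv, hv'⟩ := aux_one a.im c.im (by simp) (by simp) hpr
    have hcv : c.im = v * a.im * v⁻¹ := by rw [hv', mul_assoc, mul_inv_cancel₀ hv, mul_one]
    obtain ⟨w, hw, hw1, hw2⟩ := aux_two c.im (v * b.im * v⁻¹) d.im (by simp)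
      (by rw [aux_reconj _ _ hv]; simp) (by simp)
      (by
        rw [← hqs, map_mul, map_mul, map_inv₀]
        have : Quaternion.normSq v ≠ 0 := by simpa using hv
        field_simp)
      (by
        rw [← hdot, hcv]
        have : v * a.im * v⁻¹ * (v * b.im * v⁻¹) = v * (a.im * b.im) * v⁻¹ := by
          simp only [mul_assoc, inv_mul_cancel_left₀ hv]
        rw [this, aux_reconj _ _ hv])
    have hu : w * v ≠ 0 := mul_ne_zero hw hv
    have e1 : (w * v) * a.im = c.im * (w * v) := by
      rw [mul_assoc, hv', ← mul_assoc, hw1, mul_assoc]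
    have e2 : (w * v) * b.im = d.im * (w * v) := by
      rw [← mul_assoc d.im, ← hw2]
      simp only [mul_assoc, inv_mul_cancel₀ hv, mul_one]
    generalize w * v = u at hu e1 e2
    have f1 : u * a = c * u := by
      rw [← Quaternion.re_add_im a, ← Quaternion.re_add_im c, mul_add, add_mul, e1, h1,
        Quaternion.coe_commutes]
    have f2 : u * b = d * u := by
      rw [← Quaternion.re_add_im b, ← Quaternion.re_add_im d, mul_add, add_mul, e2, h2,
        Quaternion.coe_commutes]
    have hn : ‖u‖ ≠ 0 := norm_ne_zero_iff.mpr hu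
    have hne : (‖u‖⁻¹ : ℝ) • u ≠ 0 := smul_ne_zero (inv_ne_zero hn) hu
    refine ⟨(‖u‖⁻¹ : ℝ) • u, ?_, ?_, ?_⟩
    · rw [norm_smul, norm_inv, norm_norm, inv_mul_cancel₀ hn]
    · rw [eq_mul_inv_iff_mul_eq₀ hne, smul_mul_assoc, f1, mul_smul_comm]
    · rw [eq_mul_inv_iff_mul_eq₀ hne, smul_mul_assoc, f2, mul_smul_comm]
  · rintro ⟨u, hu, rfl, rfl⟩
    have hu0 : u ≠ 0 := by rintro rfl; simp at hu
    refine ⟨(aux_reconj _ _ hu0).symm, (aux_reconj _ _ hu0).symm, ?_⟩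
    have hs : u⁻¹ = star u := by
      rw [Quaternion.inv_def, Quaternion.normSq_eq_norm_mul_self, hu]; simp
    have : u * a * u⁻¹ * star (u * b * u⁻¹) = u * (a * star b) * u⁻¹ := by
      rw [star_mul, star_mul, ← hs, hs, star_star, ← hs]
      simp only [mul_assoc, inv_mul_cancel_left₀ hu0]
    rw [this, aux_reconj _ _ hu0]
end

section
/- For unit quaternions a, b, set x = Re a, y = Re b, z = Re(a·star b). Then a and b commute (a·b = b·a) if and only if x² + y² + z² − 2xyz = 1. Hence the abelian locus of the character variety of the rank two free group corresponds under W(a,b) = (x,y,z) exactly to the pillowcase, the boundary of the Goldman pillow. -/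
/-- For unit quaternions `a, b` with `x = Re a`, `y = Re b`, `z = Re(a·star b)`:
`a` and `b` commute iff `x² + y² + z² − 2xyz = 1`; i.e. the abelian locus of the character
variety of the rank two free group corresponds exactly to the pillowcase. -/
theorem commute_iff_pillowcase (a b : Quaternion ℝ) (ha : ‖a‖ = 1) (hb : ‖b‖ = 1) :
    a * b = b * a ↔
      a.re ^ 2 + b.re ^ 2 + (a * star b).re ^ 2
        - 2 * a.re * b.re * (a * star b).re = 1 := by
  have hA : a.re ^ 2 + a.imI ^ 2 + a.imJ ^ 2 + a.imK ^ 2 = 1 := by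
    rw [← Quaternion.normSq_def', Quaternion.normSq_eq_norm_mul_self, ha, one_mul]
  have hB : b.re ^ 2 + b.imI ^ 2 + b.imJ ^ 2 + b.imK ^ 2 = 1 := by
    rw [← Quaternion.normSq_def', Quaternion.normSq_eq_norm_mul_self, hb, one_mul]
  have hz : (a * star b).re
      = a.re * b.re + a.imI * b.imI + a.imJ * b.imJ + a.imK * b.imK := by
    rw [Quaternion.re_mul]
    simp only [Quaternion.re_star, Quaternion.imI_star, Quaternion.imJ_star,
      Quaternion.imK_star]
    ring
  have key : 1 - (a.re ^ 2 + b.re ^ 2 + (a * star b).re ^ 2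
        - 2 * a.re * b.re * (a * star b).re)
      = (a.imI * b.imJ - a.imJ * b.imI) ^ 2 + (a.imJ * b.imK - a.imK * b.imJ) ^ 2
        + (a.imK * b.imI - a.imI * b.imK) ^ 2 := by
    rw [hz]
    have h1 : a.imI ^ 2 + a.imJ ^ 2 + a.imK ^ 2 = 1 - a.re ^ 2 := by linarith
    have h2 : b.imI ^ 2 + b.imJ ^ 2 + b.imK ^ 2 = 1 - b.re ^ 2 := by linarith
    have h3 : (a.imI ^ 2 + a.imJ ^ 2 + a.imK ^ 2) * (b.imI ^ 2 + b.imJ ^ 2 + b.imK ^ 2)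
      = (1 - a.re ^ 2) * (1 - b.re ^ 2) := by rw [h1, h2]
    linear_combination -h3
  constructor
  · intro h
    have hI := congrArg (fun q : Quaternion ℝ => q.imI) h
    have hJ := congrArg (fun q : Quaternion ℝ => q.imJ) h
    have hK := congrArg (fun q : Quaternion ℝ => q.imK) h
    simp only [Quaternion.imI_mul, Quaternion.imJ_mul, Quaternion.imK_mul] at hI hJ hK
    have e1 : a.imI * b.imJ - a.imJ * b.imI = 0 := by linarith
    have e2 : a.imJ * b.imK - a.imK * b.imJ = 0 := by linarith
    have e3 : a.imK * b.imI - a.imI * b.imK = 0 := by linarith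
    rw [e1, e2, e3] at key
    linarith
  · intro h
    rw [h] at key
    have e1 : a.imI * b.imJ - a.imJ * b.imI = 0 := by
      apply pow_eq_zero_iff (two_ne_zero) |>.mp; nlinarith
    have e2 : a.imJ * b.imK - a.imK * b.imJ = 0 := by
      apply pow_eq_zero_iff (two_ne_zero) |>.mp; nlinarith
    have e3 : a.imK * b.imI - a.imI * b.imK = 0 := by
      apply pow_eq_zero_iff (two_ne_zero) |>.mp; nlinarith
    ext
    · rw [Quaternion.re_mul, Quaternion.re_mul]; ring
    · rw [Quaternion.imI_mul, Quaternion.imI_mul]; linarith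
    · rw [Quaternion.imJ_mul, Quaternion.imJ_mul]; linarith
    · rw [Quaternion.imK_mul, Quaternion.imK_mul]; linarith
end

section
/- For any unit quaternions a, b, setting x = Re a, y = Re b, z = Re(a·star b), the real part of the commutator satisfies Re(a·b·a⁻¹·b⁻¹) = 2(x² + y² + z² − 2xyz) − 1. -/
/-- For unit quaternions `a, b` with `x = Re a`, `y = Re b`, `z = Re(a·star b)`, the real
part of the commutator satisfies `Re(aba⁻¹b⁻¹) = 2(x² + y² + z² − 2xyz) − 1`. -/
theorem re_commutator (a b : Quaternion ℝ) (ha : ‖a‖ = 1) (hb : ‖b‖ = 1) :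
    (a * b * a⁻¹ * b⁻¹).re =
      2 * (a.re ^ 2 + b.re ^ 2 + (a * star b).re ^ 2
        - 2 * a.re * b.re * (a * star b).re) - 1 := by
  have hA : a.re ^ 2 + a.imI ^ 2 + a.imJ ^ 2 + a.imK ^ 2 = 1 := by
    rw [← Quaternion.normSq_def', Quaternion.normSq_eq_norm_mul_self, ha, mul_one]
  have hB : b.re ^ 2 + b.imI ^ 2 + b.imJ ^ 2 + b.imK ^ 2 = 1 := by
    rw [← Quaternion.normSq_def', Quaternion.normSq_eq_norm_mul_self, hb, mul_one]
  have ia : a⁻¹ = star a := by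
    rw [Quaternion.inv_def, Quaternion.normSq_eq_norm_mul_self, ha]; simp
  have ib : b⁻¹ = star b := by
    rw [Quaternion.inv_def, Quaternion.normSq_eq_norm_mul_self, hb]; simp
  rw [ia, ib]
  simp only [Quaternion.re_mul, Quaternion.imI_mul, Quaternion.imJ_mul, Quaternion.imK_mul,
    Quaternion.re_star, Quaternion.imI_star, Quaternion.imJ_star, Quaternion.imK_star]
  linear_combination
    (2 * b.re ^ 2 - (b.re ^ 2 + b.imI ^ 2 + b.imJ ^ 2 + b.imK ^ 2)) * hA
      + (2 * a.re ^ 2 - 1) * hB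
end

section
/- The set of real numbers of the form Re(a·b·a⁻¹·b⁻¹), as a and b range over all unit quaternions, is exactly the closed interval [−1, 1]. -/
theorem inv_eq_star_aux (q : Quaternion ℝ) (h : ‖q‖ = 1) : q⁻¹ = star q := by
  have h1 : Quaternion.normSq q = 1 := by
    rw [Quaternion.normSq_eq_norm_mul_self, h, one_mul]
  apply inv_eq_of_mul_eq_one_right
  rw [Quaternion.self_mul_star, h1]
  rfl

theorem norm_one_aux (q : Quaternion ℝ) 
    (h : q.re ^ 2 + q.imI ^ 2 + q.imJ ^ 2 + q.imK ^ 2 = 1) : ‖q‖ = 1 := by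
  have h1 : ‖q‖ * ‖q‖ = 1 := by
    rw [← Quaternion.normSq_eq_norm_mul_self, Quaternion.normSq_def', h]
  nlinarith [norm_nonneg q]

/-- The set of values of `Re(aba⁻¹b⁻¹)` over pairs of unit quaternions `a, b` is exactly
the closed interval `[−1,1]`; i.e. the character `κ` of the commutator maps the character
variety of the rank two free group onto `[−1,1]`. -/
theorem range_re_commutator :
    {t : ℝ | ∃ a b : Quaternion ℝ, ‖a‖ = 1 ∧ ‖b‖ = 1 ∧ (a * b * a⁻¹ * b⁻¹).re = t} =
      Set.Icc (-1) 1 := by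
  ext t
  simp only [Set.mem_ofPred_eq, Set.mem_Icc]
  constructor
  · rintro ⟨a, b, ha, hb, rfl⟩
    have hn : ‖a * b * a⁻¹ * b⁻¹‖ = 1 := by simp [ha, hb]
    generalize a * b * a⁻¹ * b⁻¹ = q at hn
    have h1 : Quaternion.normSq q = 1 := by
      rw [Quaternion.normSq_eq_norm_mul_self, hn, one_mul]
    rw [Quaternion.normSq_def'] at h1
    apply abs_le.mp
    apply abs_le_one_iff_mul_self_le_one.mpr
    nlinarith [sq_nonneg q.imI, sq_nonneg q.imJ, sq_nonneg q.imK]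
  · rintro ⟨h1, h2⟩
    have hc : √((1 + t) / 2) ^ 2 = (1 + t) / 2 := Real.sq_sqrt (by linarith)
    have hs : √((1 - t) / 2) ^ 2 = (1 - t) / 2 := Real.sq_sqrt (by linarith)
    generalize √((1 + t) / 2) = c at hc
    generalize √((1 - t) / 2) = s at hs
    obtain ⟨a, a1, a2, a3, a4⟩ : ∃ a : Quaternion ℝ,
        a.re = 0 ∧ a.imI = 1 ∧ a.imJ = 0 ∧ a.imK = 0 := ⟨⟨0, 1, 0, 0⟩, rfl, rfl, rfl, rfl⟩
    obtain ⟨b, b1, b2, b3, b4⟩ : ∃ b : Quaternion ℝ,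
        b.re = c ∧ b.imI = 0 ∧ b.imJ = s ∧ b.imK = 0 := ⟨⟨c, 0, s, 0⟩, rfl, rfl, rfl, rfl⟩
    have ha : ‖a‖ = 1 := norm_one_aux _ (by rw [a1, a2, a3, a4]; norm_num)
    have hb : ‖b‖ = 1 := norm_one_aux _ (by rw [b1, b2, b3, b4]; linarith)
    refine ⟨a, b, ha, hb, ?_⟩
    rw [inv_eq_star_aux _ ha, inv_eq_star_aux _ hb]
    simp [a1, a2, a3, a4, b1, b2, b3, b4]
    linarith
end

section
/- For unit quaternions r, s, the commutator satisfies r·s·r⁻¹·s⁻¹ = −1 if and only if Re(r) = 0, Re(s) = 0, and Re(r·star s) = 0. -/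
/-- For unit quaternions `r, s`, the commutator `rsr⁻¹s⁻¹` equals `−1` iff
`Re(r) = 0`, `Re(s) = 0` and `Re(r·star s) = 0`. -/
theorem commutator_eq_neg_one_iff (r s : Quaternion ℝ) (hr : ‖r‖ = 1) (hs : ‖s‖ = 1) :
    r * s * r⁻¹ * s⁻¹ = -1 ↔ r.re = 0 ∧ s.re = 0 ∧ (r * star s).re = 0 := by
  have hr0 : r ≠ 0 := by rintro rfl; simp at hr
  have hs0 : s ≠ 0 := by rintro rfl; simp at hs
  have h1 : r * s * r⁻¹ * s⁻¹ = -1 ↔ r * s = -(s * r) := by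
    rw [mul_inv_eq_iff_eq_mul₀ hs0, mul_inv_eq_iff_eq_mul₀ hr0]
    simp
  have nr : r.re ^ 2 + r.imI ^ 2 + r.imJ ^ 2 + r.imK ^ 2 = 1 := by
    rw [← Quaternion.normSq_def', Quaternion.normSq_eq_norm_mul_self, hr, one_mul]
  have ns : s.re ^ 2 + s.imI ^ 2 + s.imJ ^ 2 + s.imK ^ 2 = 1 := by
    rw [← Quaternion.normSq_def', Quaternion.normSq_eq_norm_mul_self, hs, one_mul]
  rw [h1, Quaternion.ext_iff]
  simp only [Quaternion.re_mul, Quaternion.imI_mul, Quaternion.imJ_mul, Quaternion.imK_mul,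
    Quaternion.re_neg, Quaternion.imI_neg, Quaternion.imJ_neg, Quaternion.imK_neg,
    Quaternion.re_star, Quaternion.imI_star, Quaternion.imJ_star, Quaternion.imK_star]
  constructor
  · rintro ⟨e0, e1, e2, e3⟩
    have hb : s.re = 0 := by
      linear_combination (-s.re) * nr + r.re / 2 * e0 + r.imI / 2 * e1 + r.imJ / 2 * e2
        + r.imK / 2 * e3
    have ha : r.re = 0 := by
      linear_combination (-r.re) * ns + s.re / 2 * e0 + s.imI / 2 * e1 + s.imJ / 2 * e2
        + s.imK / 2 * e3
    refine ⟨ha, hb, ?_⟩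
    linear_combination (-1 / 2) * e0 + 2 * r.re * hb
  · rintro ⟨ha, hb, h⟩
    simp only [ha, hb] at h ⊢
    refine ⟨?_, ?_, ?_, ?_⟩
    · linear_combination (-2) * h
    all_goals ring
end

section
/- Suppose R₋, S₋, R₊, S₊ are unit quaternions satisfying R₋S₋R₋⁻¹S₋⁻¹·R₊S₊R₊⁻¹S₊⁻¹ = 1. Let W = {Im(R₋), Im(star S₋ · star R₋), Im(S₊ · S₋), Im(star S₋ · R₊ · star S₊), Im(star R₊ · S₋)} ⊂ ℍ. Then the ℝ-linear span of W has dimension at most 2. -/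
namespace SpanW

/-- Triple product of the imaginary parts. -/
def D (a b c : Quaternion ℝ) : ℝ :=
  a.imI * (b.imJ * c.imK - b.imK * c.imJ) - a.imJ * (b.imI * c.imK - b.imK * c.imI)
    + a.imK * (b.imI * c.imJ - b.imJ * c.imI)

lemma D_re (a b c : Quaternion ℝ) : (a * b * c).re - (c * b * a).re = -2 * D a b c := by
  simp only [D, Quaternion.re_mul, Quaternion.imI_mul, Quaternion.imJ_mul, Quaternion.imK_mul]
  ring

lemma re_comm (a b : Quaternion ℝ) : (a * b).re = (b * a).re := by
  simp only [Quaternion.re_mul]; ring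

lemma unit_star {a : Quaternion ℝ} (h : ‖a‖ = 1) : a * star a = 1 := by
  rw [Quaternion.self_mul_star, Quaternion.normSq_eq_norm_mul_self, h]; simp

lemma unit_star' {a : Quaternion ℝ} (h : ‖a‖ = 1) : star a * a = 1 :=
  mul_eq_one_comm.1 (unit_star h)

lemma eq_star {x y : Quaternion ℝ} (hy : ‖y‖ = 1) (h : x * y = 1) : x = star y := by
  calc x = x * (y * star y) := by rw [unit_star hy, mul_one]
    _ = star y := by rw [← mul_assoc, h, one_mul]

lemma re_eq {x y : Quaternion ℝ} (hy : ‖y‖ = 1) (h : x * y = 1) : x.re = y.re := by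
  rw [eq_star hy h]; simp

/-- the pentagon relations -/
structure P (a b c d e : Quaternion ℝ) : Prop where
  ha : ‖a‖ = 1
  hb : ‖b‖ = 1
  hc : ‖c‖ = 1
  hd : ‖d‖ = 1
  he : ‖e‖ = 1
  h1 : a * b * c * d * e = 1
  h2 : e * d * c * b * a = 1

lemma P.rot {a b c d e : Quaternion ℝ} (h : P a b c d e) : P b c d e a := by
  refine ⟨h.hb, h.hc, h.hd, h.he, h.ha, ?_, ?_⟩
  · apply mul_eq_one_comm.1; simpa only [mul_assoc] using h.h1
  · have := mul_eq_one_comm.1 h.h2; simpa only [mul_assoc] using this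

lemma P.D0 {a b c d e : Quaternion ℝ} (h : P a b c d e) : D a b c = 0 := by
  have e1 : (a * b * c).re = (d * e).re :=
    re_eq (by rw [norm_mul, h.hd, h.he, mul_one]) (by simpa only [mul_assoc] using h.h1)
  have e2 : (c * b * a).re = (e * d).re :=
    re_eq (by rw [norm_mul, h.hd, h.he, mul_one])
      (by apply mul_eq_one_comm.1; simpa only [mul_assoc] using h.h2)
  have := D_re a b c
  rw [e1, e2, re_comm] at this
  linarith

lemma real_comm {a : Quaternion ℝ} (h : a.im = 0) (x : Quaternion ℝ) : a * x = x * a := by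
  have : a = (a.re : Quaternion ℝ) := by
    conv_lhs => rw [← Quaternion.re_add_im a, h, add_zero]
  rw [this]; exact (Quaternion.coe_commutes _ _)

/-- four-term case -/
lemma P.D4 {a b c d e : Quaternion ℝ} (h : P a b c d e) (hz : a.im = 0) : D b c e = 0 := by
  have c1 := real_comm hz
  have e1 : (e * b * c).re = (a * d).re := by
    apply re_eq (by rw [norm_mul, h.hd, h.ha, mul_one])
    have : e * (a * b * c * d) = 1 := mul_eq_one_comm.1 h.h1
    rw [← this, ← mul_assoc (e * b * c), mul_assoc (e * b) c a, ← c1, mul_assoc e b, ← mul_assoc b a, ← c1]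
    simp only [mul_assoc]
  have e2 : (c * b * e).re = (d * a).re := by
    apply re_eq (by rw [norm_mul, h.hd, h.ha, mul_one])
    apply mul_eq_one_comm.1
    have : d * c * b * a * e = 1 := by
      have := h.h2
      apply mul_eq_one_comm.1
      simpa only [mul_assoc] using this
    rw [← this, mul_assoc d a, c1]
    rw [mul_assoc _ a e, c1 e]
    simp only [mul_assoc]
  have := D_re e b c
  rw [e1, e2, re_comm] at this
  have h3 : D b c e = D e b c := by simp only [D]; ring
  linarith

/-- four-term case, other triple -/
lemma P.D4' {a b c d e : Quaternion ℝ} (h : P a b c d e) (hz : a.im = 0) : D b d e = 0 := by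
  have hr : P e d c b a := ⟨h.he, h.hd, h.hc, h.hb, h.ha, h.h2, h.h1⟩
  have := hr.rot.rot.rot.rot.D4 hz
  have h3 : D b d e = - D e d b := by simp only [D]; ring
  linarith

lemma im_zero {a : Quaternion ℝ} {t : ℝ} (ht : t ≠ 0) (h1 : t * a.imI = 0) (h2 : t * a.imJ = 0)
    (h3 : t * a.imK = 0) : a.im = 0 := by
  ext <;> simp_all <;> rfl

lemma cramer (a b c x : Quaternion ℝ) :
    D a b c * x.imI = D x b c * a.imI + D a x c * b.imI + D a b x * c.imI ∧
    D a b c * x.imJ = D x b c * a.imJ + D a x c * b.imJ + D a b x * c.imJ ∧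
    D a b c * x.imK = D x b c * a.imK + D a x c * b.imK + D a b x * c.imK := by
  simp only [D]; refine ⟨?_, ?_, ?_⟩ <;> ring

lemma perm1 (a b c : Quaternion ℝ) : D a b c = D b c a := by simp only [D]; ring
lemma perm2 (a b c : Quaternion ℝ) : D a b c = - D b a c := by simp only [D]; ring
lemma perm3 (a b c : Quaternion ℝ) : D a b c = - D a c b := by simp only [D]; ring
lemma same1 (a b : Quaternion ℝ) : D a a b = 0 := by simp only [D]; ring
lemma same2 (a b : Quaternion ℝ) : D a b a = 0 := by simp only [D]; ring
lemma same3 (a b : Quaternion ℝ) : D b a a = 0 := by simp only [D]; ring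

lemma P.D5 {a b c d e : Quaternion ℝ} (h : P a b c d e) : D b c e = 0 := by
  by_contra hne
  have habc := h.D0
  have hbcd := h.rot.D0
  have hcde := h.rot.rot.D0
  have hdea := h.rot.rot.rot.D0
  have heab := h.rot.rot.rot.rot.D0
  obtain ⟨d1, d2, d3⟩ := cramer b c e d
  obtain ⟨a1, a2, a3⟩ := cramer b c e a
  have z1 : D d c e = 0 := by rw [perm2, hcde, neg_zero]
  have z2 : D b a e = 0 := by linarith [perm1 e a b, perm2 b a e]
  have z3 : D b c a = 0 := by rw [← perm1]; exact habc
  rw [z1, hbcd] at d1 d2 d3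
  rw [z2, z3] at a1 a2 a3
  have key : D b d e * D a c e * D b c e = 0 := by
    have : D b c e * D b c e * D d e a = D b d e * D a c e * D b c e := by
      have : D b c e * D b c e * D d e a =
        (D b c e * d.imI) * (e.imJ * (D b c e * a.imK) - e.imK * (D b c e * a.imJ))
        - (D b c e * d.imJ) * (e.imI * (D b c e * a.imK) - e.imK * (D b c e * a.imI))
        + (D b c e * d.imK) * (e.imI * (D b c e * a.imJ) - e.imJ * (D b c e * a.imI)) := by
        rw [show D d e a = d.imI * (e.imJ * a.imK - e.imK * a.imJ)
          - d.imJ * (e.imI * a.imK - e.imK * a.imI)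
          + d.imK * (e.imI * a.imJ - e.imJ * a.imI) from rfl]
        ring
      rw [this, d1, d2, d3, a1, a2, a3]
      generalize D b d e = s
      generalize D a c e = t
      simp only [D]; ring
    rw [hdea] at this
    linarith
  rcases mul_eq_zero.1 key with k | k
  · rcases mul_eq_zero.1 k with k | k
    · rw [k] at d1 d2 d3
      have hd : d.im = 0 := im_zero hne (by linarith) (by linarith) (by linarith)
      apply hne
      have := h.rot.rot.rot.D4' hd
      linarith [perm1 e b c]
    · rw [k] at a1 a2 a3
      exact hne (h.D4 (im_zero hne (by linarith) (by linarith) (by linarith)))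
  · exact hne k

lemma dep {a b c : Quaternion ℝ} (h : D a b c = 0) :
    ∃ v : Fin 3 → ℝ, v ≠ 0 ∧ v 0 • a.im + v 1 • b.im + v 2 • c.im = 0 := by
  have hdet : (!![a.imI, a.imJ, a.imK; b.imI, b.imJ, b.imK; c.imI, c.imJ, c.imK] :
      Matrix (Fin 3) (Fin 3) ℝ).det = 0 := by
    simp only [D] at h
    rw [Matrix.det_fin_three]; simp; linarith
  obtain ⟨v, hv, hv2⟩ := Matrix.exists_vecMul_eq_zero_iff.2 hdet
  refine ⟨v, hv, ?_⟩
  have g0 := congrFun hv2 0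
  have g1 := congrFun hv2 1
  have g2 := congrFun hv2 2
  simp [Matrix.vecMul, dotProduct, Fin.sum_univ_three] at g0 g1 g2
  ext <;> simp [g0, g1, g2] <;> rfl

lemma finrank_le (s : Set (Quaternion ℝ)) (hs : s.Finite) (him : ∀ x ∈ s, x.im = x)
    (hD : ∀ x ∈ s, ∀ y ∈ s, ∀ z ∈ s, D x y z = 0) :
    Module.finrank ℝ (Submodule.span ℝ s) ≤ 2 := by
  obtain ⟨b, hbs, hsp, hli⟩ := exists_linearIndependent ℝ s
  have hbf : b.Finite := hs.subset hbs
  have := hbf.fintype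
  rw [← hsp, finrank_span_set_eq_card hli]
  by_contra hlt
  push Not at hlt
  obtain ⟨x, y, z, hx, hy, hz, hxy, hxz, hyz⟩ := Finset.two_lt_card_iff.1 hlt
  rw [Set.mem_toFinset] at hx hy hz
  obtain ⟨v, hv, hv2⟩ := dep (hD x (hbs hx) y (hbs hy) z (hbs hz))
  rw [him x (hbs hx), him y (hbs hy), him z (hbs hz)] at hv2
  have hinj : Function.Injective (![⟨x, hx⟩, ⟨y, hy⟩, ⟨z, hz⟩] : Fin 3 → b) := by
    intro i j hij
    fin_cases i <;> fin_cases j <;> simp_all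
  have hl3 := hli.comp _ hinj
  apply hv
  funext i
  apply Fintype.linearIndependent_iff.1 hl3 v
  simpa [Fin.sum_univ_three] using hv2

lemma D_im (a b c : Quaternion ℝ) : D a.im b.im c.im = D a b c := by simp [D]

lemma perms {a b c : Quaternion ℝ} (h : D a b c = 0) :
    D b c a = 0 ∧ D c a b = 0 ∧ D b a c = 0 ∧ D a c b = 0 ∧ D c b a = 0 := by
  simp only [D] at *
  refine ⟨?_, ?_, ?_, ?_, ?_⟩ <;> linarith

lemma main {a b c d e : Quaternion ℝ} (h : P a b c d e) :
    Module.finrank ℝ (Submodule.span ℝ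
      ({a.im, b.im, c.im, d.im, e.im} : Set (Quaternion ℝ))) ≤ 2 := by
  have h0 := h.D0
  have h1 := h.rot.D0
  have h2 := h.rot.rot.D0
  have h3 := h.rot.rot.rot.D0
  have h4 := h.rot.rot.rot.rot.D0
  have g0 := h.D5
  have g1 := h.rot.D5
  have g2 := h.rot.rot.D5
  have g3 := h.rot.rot.rot.D5
  have g4 := h.rot.rot.rot.rot.D5
  apply finrank_le
  · simp
  · rintro x (rfl | rfl | rfl | rfl | rfl) <;> simp
  · obtain ⟨h0a, h0b, h0c, h0d, h0e⟩ := perms h0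
    obtain ⟨h1a, h1b, h1c, h1d, h1e⟩ := perms h1
    obtain ⟨h2a, h2b, h2c, h2d, h2e⟩ := perms h2
    obtain ⟨h3a, h3b, h3c, h3d, h3e⟩ := perms h3
    obtain ⟨h4a, h4b, h4c, h4d, h4e⟩ := perms h4
    obtain ⟨g0a, g0b, g0c, g0d, g0e⟩ := perms g0
    obtain ⟨g1a, g1b, g1c, g1d, g1e⟩ := perms g1
    obtain ⟨g2a, g2b, g2c, g2d, g2e⟩ := perms g2
    obtain ⟨g3a, g3b, g3c, g3d, g3e⟩ := perms g3
    obtain ⟨g4a, g4b, g4c, g4d, g4e⟩ := perms g4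
    rintro x (rfl | rfl | rfl | rfl | rfl) y (rfl | rfl | rfl | rfl | rfl)
      z (rfl | rfl | rfl | rfl | rfl) <;> rw [D_im] <;>
      first
      | assumption
      | exact same1 _ _
      | exact same2 _ _
      | exact same3 _ _

end SpanW


/-- If unit quaternions `R₋, S₋, R₊, S₊` satisfy the genus two relation
`[R₋,S₋][R₊,S₊] = 1`, then the real span of
`W = {Im R₋, Im(S̄₋R̄₋), Im(S₊S₋), Im(S̄₋R₊S̄₊), Im(R̄₊S₋)}` has dimension at most 2. -/
theorem span_W_dim_le_two (Rm Sm Rp Sp : Quaternion ℝ)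
    (hRm : ‖Rm‖ = 1) (hSm : ‖Sm‖ = 1) (hRp : ‖Rp‖ = 1) (hSp : ‖Sp‖ = 1)
    (hrel : Rm * Sm * Rm⁻¹ * Sm⁻¹ * (Rp * Sp * Rp⁻¹ * Sp⁻¹) = 1) :
    Module.finrank ℝ (Submodule.span ℝ
      ({Rm.im, (star Sm * star Rm).im, (Sp * Sm).im,
        (star Sm * Rp * star Sp).im, (star Rp * Sm).im} : Set (Quaternion ℝ))) ≤ 2 := by
  have iv : ∀ x : Quaternion ℝ, ‖x‖ = 1 → x⁻¹ = star x := fun x hx => by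
    rw [Quaternion.inv_def, Quaternion.normSq_eq_norm_mul_self, hx]; simp
  have n0 : ∀ x : Quaternion ℝ, ‖x‖ = 1 → x ≠ 0 := fun x hx h => by simp [h] at hx
  have a0 := n0 _ hRm
  have b0 := n0 _ hSm
  have c0 := n0 _ hRp
  have d0 := n0 _ hSp
  apply SpanW.main
  refine ⟨hRm, by simp [hRm, hSm], by simp [hSp, hSm], by simp [hSm, hRp, hSp],
    by simp [hRp, hSm], ?_, ?_⟩
  · rw [← iv _ hRm, ← iv _ hSm, ← iv _ hRp, ← iv _ hSp]
    have e1 : Rm * Sm * Rm⁻¹ * Sm⁻¹ = Sp * Rp * Sp⁻¹ * Rp⁻¹ := by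
      rw [eq_inv_of_mul_eq_one_left hrel]
      simp only [mul_inv_rev, inv_inv, mul_assoc]
    calc Rm * (Sm⁻¹ * Rm⁻¹) * (Sp * Sm) * (Sm⁻¹ * Rp * Sp⁻¹) * (Rp⁻¹ * Sm)
        = Rm * Sm⁻¹ * Rm⁻¹ * (Sp * (Sm * Sm⁻¹) * Rp * Sp⁻¹ * Rp⁻¹) * Sm := by
          simp only [mul_assoc]
      _ = Rm * Sm⁻¹ * Rm⁻¹ * (Rm * Sm * Rm⁻¹ * Sm⁻¹) * Sm := by
          rw [mul_inv_cancel₀ b0, mul_one, e1]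
      _ = 1 := by
          simp only [mul_assoc, inv_mul_cancel_left₀ a0, inv_mul_cancel_left₀ b0,
            inv_mul_cancel₀ b0, mul_one, mul_inv_cancel₀ a0]
  · rw [← iv _ hRm, ← iv _ hSm, ← iv _ hRp, ← iv _ hSp]
    simp only [mul_assoc, mul_inv_cancel_left₀ b0, inv_mul_cancel_left₀ c0,
      inv_mul_cancel_left₀ d0, inv_mul_cancel₀ a0]
end

section
/- Suppose R₋, S₋, R₊, S₊ are unit quaternions satisfying R₋S₋R₋⁻¹S₋⁻¹·R₊S₊R₊⁻¹S₊⁻¹ = 1. Let W = {Im(R₋), Im(star S₋ · star R₋), Im(S₊ · S₋), Im(star S₋ · R₊ · star S₊), Im(star R₊ · S₋)} ⊂ ℍ. Then the ℝ-linear span of W has dimension at most 1 if and only if R₋, S₋, R₊, S₊ pairwise commute (i.e., they generate an abelian subgroup of the unit quaternion group). -/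
lemma aux_star {x q : Quaternion ℝ} (h : Commute x q) : Commute x (star q) := by
  rw [Quaternion.star_eq_two_re_sub]
  have hc : Commute x ((2 * q.re : ℝ) : Quaternion ℝ) := (Quaternion.coe_commutes _ _).symm
  exact Commute.sub_right hc h

lemma aux_of_im {v x y : Quaternion ℝ} {a b : ℝ} (hx : a • v = x.im) (hy : b • v = y.im) :
    Commute x y := by
  have key : Commute x.im y.im := by
    rw [← hx, ← hy]
    exact ((Commute.refl v).smul_left a).smul_right b
  rw [← Quaternion.re_add_im x, ← Quaternion.re_add_im y]
  have hc : ∀ (r : ℝ) (z : Quaternion ℝ), Commute (r : Quaternion ℝ) z :=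
    fun r z => Quaternion.coe_commutes r z
  exact ((hc _ _).add_left ((hc _ _).symm.add_right key))

lemma aux_im_of {x y : Quaternion ℝ} (h : Commute x y) (hx : x.im ≠ 0) :
    ∃ c : ℝ, c • x.im = y.im := by
  have h' : x * y = y * x := h
  have h1 := congrArg QuaternionAlgebra.imI h'
  have h2 := congrArg QuaternionAlgebra.imJ h'
  have h3 := congrArg QuaternionAlgebra.imK h'
  simp only [Quaternion.imI_mul, Quaternion.imJ_mul, Quaternion.imK_mul] at h1 h2 h3
  have hn : x.imI ^ 2 + x.imJ ^ 2 + x.imK ^ 2 ≠ 0 := by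
    intro h0
    apply hx
    have e1 : x.imI = 0 := by nlinarith [sq_nonneg x.imI, sq_nonneg x.imJ, sq_nonneg x.imK]
    have e2 : x.imJ = 0 := by nlinarith [sq_nonneg x.imI, sq_nonneg x.imJ, sq_nonneg x.imK]
    have e3 : x.imK = 0 := by nlinarith [sq_nonneg x.imI, sq_nonneg x.imJ, sq_nonneg x.imK]
    ext <;> simp [e1, e2, e3] <;> rfl
  refine ⟨(x.imI * y.imI + x.imJ * y.imJ + x.imK * y.imK) /
    (x.imI ^ 2 + x.imJ ^ 2 + x.imK ^ 2), ?_⟩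
  have k1 : x.imJ * y.imK = x.imK * y.imJ := by linarith
  have k2 : x.imK * y.imI = x.imI * y.imK := by linarith
  have k3 : x.imI * y.imJ = x.imJ * y.imI := by linarith
  ext
  · simp
  · simp only [Quaternion.imI_smul, Quaternion.imI_im, smul_eq_mul]
    field_simp
    linear_combination x.imJ * k3 - x.imK * k2
  · simp only [Quaternion.imJ_smul, Quaternion.imJ_im, smul_eq_mul]
    field_simp
    linear_combination x.imK * k1 - x.imI * k3
  · simp only [Quaternion.imK_smul, Quaternion.imK_im, smul_eq_mul]
    field_simp
    linear_combination x.imI * k2 - x.imJ * k1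

lemma aux_rank (s : Set (Quaternion ℝ)) (h : ∀ x ∈ s, ∀ y ∈ s, Commute x y) :
    Module.finrank ℝ (Submodule.span ℝ (Quaternion.im '' s)) ≤ 1 := by
  have : ∃ v : Quaternion ℝ, Submodule.span ℝ (Quaternion.im '' s) ≤
      Submodule.span ℝ {v} := by
    by_cases hq : ∃ q ∈ s, q.im ≠ 0
    · obtain ⟨q, hqs, hq⟩ := hq
      refine ⟨q.im, Submodule.span_le.2 ?_⟩
      rintro _ ⟨y, hy, rfl⟩
      exact Submodule.mem_span_singleton.2 (aux_im_of (h q hqs y hy) hq)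
    · push Not at hq
      refine ⟨0, Submodule.span_le.2 ?_⟩
      rintro _ ⟨y, hy, rfl⟩
      rw [hq y hy]
      exact Submodule.zero_mem _
  obtain ⟨v, hv⟩ := this
  refine (Submodule.finrank_mono hv).trans ?_
  simpa using finrank_span_le_card (R := ℝ) ({v} : Set (Quaternion ℝ))

/-- If unit quaternions `R₋, S₋, R₊, S₊` satisfy the genus two relation
`[R₋,S₋][R₊,S₊] = 1`, then the real span of
`W = {Im R₋, Im(S̄₋R̄₋), Im(S₊S₋), Im(S̄₋R₊S̄₊), Im(R̄₊S₋)}` has dimension at most 1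
if and only if `R₋, S₋, R₊, S₊` pairwise commute (generate an abelian subgroup). -/
theorem span_W_dim_le_one_iff_abelian (Rm Sm Rp Sp : Quaternion ℝ)
    (hRm : ‖Rm‖ = 1) (hSm : ‖Sm‖ = 1) (hRp : ‖Rp‖ = 1) (hSp : ‖Sp‖ = 1)
    (hrel : Rm * Sm * Rm⁻¹ * Sm⁻¹ * (Rp * Sp * Rp⁻¹ * Sp⁻¹) = 1) :
    Module.finrank ℝ (Submodule.span ℝ
      ({Rm.im, (star Sm * star Rm).im, (Sp * Sm).im,
        (star Sm * Rp * star Sp).im, (star Rp * Sm).im} : Set (Quaternion ℝ))) ≤ 1 ↔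
      (Rm * Sm = Sm * Rm ∧ Rm * Rp = Rp * Rm ∧ Rm * Sp = Sp * Rm ∧
       Sm * Rp = Rp * Sm ∧ Sm * Sp = Sp * Sm ∧ Rp * Sp = Sp * Rp) := by
  have ns : ∀ q : Quaternion ℝ, ‖q‖ = 1 → q * star q = 1 ∧ star q * q = 1 := by
    intro q hq
    rw [Quaternion.self_mul_star, Quaternion.star_mul_self, Quaternion.normSq_eq_norm_mul_self, hq]
    simp
  constructor
  · intro h
    obtain ⟨v, hv⟩ := finrank_le_one_iff.1 h
    have hv' : ∀ q : Quaternion ℝ, q.im ∈ ({Rm.im, (star Sm * star Rm).im, (Sp * Sm).im,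
        (star Sm * Rp * star Sp).im, (star Rp * Sm).im} : Set (Quaternion ℝ)) →
        ∃ c : ℝ, c • (v : Quaternion ℝ) = q.im := by
      intro q hq
      obtain ⟨c, hc⟩ := hv ⟨q.im, Submodule.subset_span hq⟩
      exact ⟨c, congrArg Subtype.val hc⟩
    obtain ⟨a, ha⟩ := hv' Rm (by simp)
    obtain ⟨b, hb⟩ := hv' (star Sm * star Rm) (by simp)
    obtain ⟨d, hd⟩ := hv' (Sp * Sm) (by simp)
    obtain ⟨e, he⟩ := hv' (star Rp * Sm) (by simp)
    have gen : ∀ x : Quaternion ℝ, Commute x Rm → Commute x (star Sm * star Rm) →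
        Commute x (Sp * Sm) → Commute x (star Rp * Sm) →
        Commute x Rm ∧ Commute x Sm ∧ Commute x Sp ∧ Commute x Rp := by
      intro x h1 h2 h3 h4
      have hS' : Commute x (star Sm) := by
        have := h2.mul_right h1
        rwa [mul_assoc, (ns Rm hRm).2, mul_one] at this
      have hS : Commute x Sm := by simpa using aux_star hS'
      have hSp' : Commute x Sp := by
        have := h3.mul_right hS'
        rwa [mul_assoc, (ns Sm hSm).1, mul_one] at this
      have hRp' : Commute x (star Rp) := by
        have := h4.mul_right hS'
        rwa [mul_assoc, (ns Sm hSm).1, mul_one] at this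
      exact ⟨h1, hS, hSp', by simpa using aux_star hRp'⟩
    have g1 := gen _ (aux_of_im ha ha) (aux_of_im ha hb) (aux_of_im ha hd) (aux_of_im ha he)
    have g2 := gen _ (aux_of_im hb ha) (aux_of_im hb hb) (aux_of_im hb hd) (aux_of_im hb he)
    have g3 := gen _ (aux_of_im hd ha) (aux_of_im hd hb) (aux_of_im hd hd) (aux_of_im hd he)
    have g4 := gen _ (aux_of_im he ha) (aux_of_im he hb) (aux_of_im he hd) (aux_of_im he he)
    have kS := gen Sm g1.2.1.symm g2.2.1.symm g3.2.1.symm g4.2.1.symm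
    have kP := gen Sp g1.2.2.1.symm g2.2.2.1.symm g3.2.2.1.symm g4.2.2.1.symm
    exact ⟨g1.2.1, g1.2.2.2, g1.2.2.1, kS.2.2.2, kS.2.2.1, kP.2.2.2.symm⟩
  · rintro ⟨h1, h2, h3, h4, h5, h6⟩
    have c1 : Commute Rm Sm := h1
    have c2 : Commute Rm Rp := h2
    have c3 : Commute Rm Sp := h3
    have c4 : Commute Sm Rp := h4
    have c5 : Commute Sm Sp := h5
    have c6 : Commute Rp Sp := h6
    have gen : ∀ x : Quaternion ℝ, Commute x Rm → Commute x Sm → Commute x Rp → Commute x Sp →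
        ∀ y ∈ ({Rm, star Sm * star Rm, Sp * Sm, star Sm * Rp * star Sp, star Rp * Sm} :
          Set (Quaternion ℝ)), Commute x y := by
      intro x k1 k2 k3 k4 y hy
      simp only [Set.mem_insert_iff, Set.mem_singleton_iff] at hy
      rcases hy with rfl | rfl | rfl | rfl | rfl
      · exact k1
      · exact (aux_star k2).mul_right (aux_star k1)
      · exact k4.mul_right k2
      · exact ((aux_star k2).mul_right k3).mul_right (aux_star k4)
      · exact (aux_star k3).mul_right k2
    have := aux_rank {Rm, star Sm * star Rm, Sp * Sm, star Sm * Rp * star Sp, star Rp * Sm} (by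
      intro x hx
      exact gen x (gen Rm (.refl _) c1 c2 c3 x hx).symm (gen Sm c1.symm (.refl _) c4 c5 x hx).symm
        (gen Rp c2.symm c4.symm (.refl _) c6 x hx).symm
        (gen Sp c3.symm c5.symm c6.symm (.refl _) x hx).symm)
    rw [Set.image_insert_eq, Set.image_insert_eq, Set.image_insert_eq, Set.image_insert_eq,
      Set.image_singleton] at this
    exact this
end

section
/- Let Q be a 4×4 complex matrix that is Hermitian, satisfies conj(Q) = −Q (entrywise complex conjugation), and has det Q ≠ 0. Then there exist vectors v₁, v₂ ∈ ℂ⁴ and real numbers λ₁, λ₂ > 0 such that Q·v₁ = λ₁·v₁, Q·v₂ = λ₂·v₂, Q·(conj v₁) = −λ₁·(conj v₁), Q·(conj v₂) = −λ₂·(conj v₂), and the four nonzero vectors v₁, v₂, conj v₁, conj v₂ are pairwise orthogonal with respect to the standard Hermitian inner product on ℂ⁴ (hence form an orthogonal basis of ℂ⁴). -/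
open scoped ComplexConjugate

lemma aux_conj_s19 (Q : Matrix (Fin 4) (Fin 4) ℂ) (hconj : Q.map (starRingEnd ℂ) = -Q)
    (v : Fin 4 → ℂ) (l : ℂ) (hl : conj l = l) (h : Q.mulVec v = l • v) :
    Q.mulVec (fun i => conj (v i)) = (-l) • (fun i => conj (v i)) := by
  funext i
  have h1 := congrArg conj (congrFun h i)
  simp only [Matrix.mulVec, dotProduct, map_sum, map_mul, Pi.smul_apply, smul_eq_mul, hl] at h1 ⊢
  rw [neg_mul, ← h1, ← Finset.sum_neg_distrib]
  refine Finset.sum_congr rfl fun j _ => ?_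
  have h2 := congrFun (congrFun hconj i) j
  simp only [Matrix.map_apply, Matrix.neg_apply] at h2
  rw [h2]; ring

lemma aux_orth (Q : Matrix (Fin 4) (Fin 4) ℂ) (hT : Q.transpose = -Q)
    (v w : Fin 4 → ℂ) (l m : ℝ) (hl : 0 < l) (hm : 0 < m)
    (hv : Q.mulVec v = (l : ℂ) • v) (hw : Q.mulVec w = (m : ℂ) • w) :
    (∑ i, conj (v i) * conj (w i)) = 0 := by
  have h1 : v ⬝ᵥ Q.mulVec w = - (Q.mulVec v ⬝ᵥ w) := by
    rw [Matrix.dotProduct_mulVec, ← Matrix.mulVec_transpose, hT, Matrix.neg_mulVec, neg_dotProduct]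
  rw [hv, hw, dotProduct_smul, smul_dotProduct, smul_eq_mul, smul_eq_mul] at h1
  have h2 : ((l + m : ℝ) : ℂ) * (v ⬝ᵥ w) = 0 := by push_cast; linear_combination h1
  have h3 : v ⬝ᵥ w = 0 := by
    rcases mul_eq_zero.1 h2 with h | h
    · exact absurd (Complex.ofReal_eq_zero.1 h) (by positivity)
    · exact h
  have := congrArg conj h3
  simpa [dotProduct] using this

lemma aux_pigeon (f : Fin 4 → ℝ) (h : ∀ i, f i ≠ 0) :
    ∃ i j, i ≠ j ∧ ((0 < f i ∧ 0 < f j) ∨ (f i < 0 ∧ f j < 0)) := by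
  rcases lt_or_gt_of_ne (h 0) with h0 | h0 <;> rcases lt_or_gt_of_ne (h 1) with h1 | h1 <;>
    rcases lt_or_gt_of_ne (h 2) with h2 | h2
  all_goals first
    | exact ⟨0, 1, by decide, Or.inl ⟨h0, h1⟩⟩
    | exact ⟨0, 1, by decide, Or.inr ⟨h0, h1⟩⟩
    | exact ⟨0, 2, by decide, Or.inl ⟨h0, h2⟩⟩
    | exact ⟨0, 2, by decide, Or.inr ⟨h0, h2⟩⟩
    | exact ⟨1, 2, by decide, Or.inl ⟨h1, h2⟩⟩
    | exact ⟨1, 2, by decide, Or.inr ⟨h1, h2⟩⟩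

lemma aux_pair (Q : Matrix (Fin 4) (Fin 4) ℂ)
    (hherm : Q.IsHermitian) (hconj : Q.map (starRingEnd ℂ) = -Q) (hdet : Q.det ≠ 0) :
    ∃ (v₁ v₂ : Fin 4 → ℂ) (l₁ l₂ : ℝ), 0 < l₁ ∧ 0 < l₂ ∧
      Q.mulVec v₁ = (l₁ : ℂ) • v₁ ∧ Q.mulVec v₂ = (l₂ : ℂ) • v₂ ∧
      v₁ ≠ 0 ∧ v₂ ≠ 0 ∧ (∑ i, conj (v₁ i) * v₂ i) = 0 := by
  have hne : ∀ i, hherm.eigenvalues i ≠ 0 := by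
    intro i hi
    apply hdet
    rw [hherm.det_eq_prod_eigenvalues]
    exact Finset.prod_eq_zero (Finset.mem_univ i) (by simp [hi])
  have hev : ∀ i, Q.mulVec (hherm.eigenvectorBasis i).ofLp =
      ((hherm.eigenvalues i : ℝ) : ℂ) • (hherm.eigenvectorBasis i).ofLp := by
    intro i
    rw [hherm.mulVec_eigenvectorBasis i]
    funext k
    simp
  have hnz : ∀ i, (hherm.eigenvectorBasis i).ofLp ≠ 0 := by
    intro i h
    apply hherm.eigenvectorBasis.toBasis.ne_zero i
    ext k
    simpa using congrFun h k
  have hor : ∀ i j, i ≠ j → (∑ k, conj ((hherm.eigenvectorBasis i).ofLp k) *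
      (hherm.eigenvectorBasis j).ofLp k) = 0 := by
    intro i j hij
    have := hherm.eigenvectorBasis.orthonormal.2 hij
    beta_reduce at this
    rw [PiLp.inner_apply] at this
    rw [← this]
    refine Finset.sum_congr rfl fun k _ => ?_
    simp [mul_comm]
  obtain ⟨i, j, hij, ⟨hi, hj⟩ | ⟨hi, hj⟩⟩ := aux_pigeon _ hne
  · exact ⟨_, _, _, _, hi, hj, hev i, hev j, hnz i, hnz j, hor i j hij⟩
  · have hz : ∀ v : Fin 4 → ℂ, v ≠ 0 → (fun i => conj (v i)) ≠ 0 := by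
      intro v hv h
      apply hv
      funext k
      simpa using congrFun h k
    refine ⟨_, _, -hherm.eigenvalues i, -hherm.eigenvalues j, by linarith, by linarith,
      ?_, ?_, hz _ (hnz i), hz _ (hnz j), ?_⟩
    · rw [aux_conj_s19 Q hconj _ _ (Complex.conj_ofReal _) (hev i)]; push_cast; rfl
    · rw [aux_conj_s19 Q hconj _ _ (Complex.conj_ofReal _) (hev j)]; push_cast; rfl
    · have := congrArg conj (hor i j hij)
      simpa using this

/-- If a 4×4 complex matrix `Q` is Hermitian, satisfies `conj Q = −Q` (entrywise complex
conjugation) and has nonzero determinant, then there are vectors `v₁, v₂ ∈ ℂ⁴` and reals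
`λ₁, λ₂ > 0` with `Qv₁ = λ₁v₁`, `Qv₂ = λ₂v₂`, `Q(conj v₁) = −λ₁(conj v₁)`,
`Q(conj v₂) = −λ₂(conj v₂)`, the vectors `v₁, v₂, conj v₁, conj v₂` being nonzero and
pairwise orthogonal for the standard Hermitian inner product `⟨v,w⟩ = Σᵢ conj(vᵢ)·wᵢ`. -/
theorem hermitian_anticonj_eigenbasis (Q : Matrix (Fin 4) (Fin 4) ℂ)
    (hherm : Q.IsHermitian) (hconj : Q.map (starRingEnd ℂ) = -Q) (hdet : Q.det ≠ 0) :
    ∃ (v₁ v₂ : Fin 4 → ℂ) (l₁ l₂ : ℝ), 0 < l₁ ∧ 0 < l₂ ∧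
      Q.mulVec v₁ = (l₁ : ℂ) • v₁ ∧
      Q.mulVec v₂ = (l₂ : ℂ) • v₂ ∧
      Q.mulVec (fun i => conj (v₁ i)) = (-(l₁ : ℂ)) • (fun i => conj (v₁ i)) ∧
      Q.mulVec (fun i => conj (v₂ i)) = (-(l₂ : ℂ)) • (fun i => conj (v₂ i)) ∧
      v₁ ≠ 0 ∧ v₂ ≠ 0 ∧
      (∑ i, conj (v₁ i) * v₂ i) = 0 ∧
      (∑ i, conj (v₁ i) * conj (v₁ i)) = 0 ∧
      (∑ i, conj (v₁ i) * conj (v₂ i)) = 0 ∧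
      (∑ i, conj (v₂ i) * conj (v₁ i)) = 0 ∧
      (∑ i, conj (v₂ i) * conj (v₂ i)) = 0 ∧
      (∑ i, conj (conj (v₁ i)) * conj (v₂ i)) = 0 := by
  obtain ⟨v, w, l, m, hl, hm, hv, hw, hv0, hw0, ho⟩ := aux_pair Q hherm hconj hdet
  have hT : Q.transpose = -Q := by
    rw [← hconj]
    ext i j
    simpa using (hherm.apply j i).symm
  refine ⟨v, w, l, m, hl, hm, hv, hw, aux_conj_s19 Q hconj _ _ (Complex.conj_ofReal _) hv,
    aux_conj_s19 Q hconj _ _ (Complex.conj_ofReal _) hw, hv0, hw0, ho,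
    aux_orth Q hT v v l l hl hl hv hv, aux_orth Q hT v w l m hl hm hv hw,
    aux_orth Q hT w v m l hm hl hw hv, aux_orth Q hT w w m m hm hm hw hw, ?_⟩
  have := congrArg conj ho
  simpa using this
end
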